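/- arXiv:1504.07364 — 2 statements merged into one kernel-verified Lean document; each statement's English description precedes it below -/
import Mathlib

section
/- Let r, s ∈ ℚ²∖ℤ². Then each Fricke function f_r is holomorphic on all of ℍ, and f_r(τ) = f_s(τ) for all τ ∈ ℍ if and only if r ≡ s (mod ℤ²) or r ≡ −s (mod ℤ²). In particular f_r depends only on ±r modulo ℤ². -/
open Complex UpperHalfPlane Matrix MatrixGroups CongruenceSubgroup
open scoped UpperHalfPlane Manifold Real

noncomputable section

/-- `N·τ` as a point of the upper half-plane (junk value `τ` if `N = 0`). -/
def hsmul (N : ℕ) (τ : UpperHalfPlane) : UpperHalfPlane :=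
  if hN : 0 < N then
    ⟨(N : ℂ) * τ, by
      have h0 : (0 : ℝ) < (N : ℝ) := by exact_mod_cast hN
      simpa [Complex.mul_im] using mul_pos h0 τ.2⟩
  else τ

/-- The Siegel function `g_r(τ)` given by its infinite product expansion. -/
def siegel (r : ℚ × ℚ) (τ : ℍ) : ℂ :=
  -Complex.exp ((Real.pi : ℂ) * Complex.I * (((r.1 : ℂ) ^ 2 - (r.1 : ℂ) + 1 / 6) * τ)) *
    Complex.exp ((Real.pi : ℂ) * Complex.I * (r.2 : ℂ) * ((r.1 : ℂ) - 1)) *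
    (1 - Complex.exp (2 * (Real.pi : ℂ) * Complex.I * ((r.1 : ℂ) * τ + (r.2 : ℂ)))) *
    ∏' n : ℕ,
      ((1 - Complex.exp (2 * (Real.pi : ℂ) * Complex.I *
          (((n : ℂ) + 1 + (r.1 : ℂ)) * τ + (r.2 : ℂ)))) *
       (1 - Complex.exp (2 * (Real.pi : ℂ) * Complex.I *
          (((n : ℂ) + 1 - (r.1 : ℂ)) * τ - (r.2 : ℂ)))))

/-- The lattice point `ω = m·τ + n` attached to a pair `(m,n) ∈ ℤ²`. -/
def lat (τ : ℍ) (p : ℤ × ℤ) : ℂ := (p.1 : ℂ) * τ + (p.2 : ℂ)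

/-- `g₂(τ) = 60 ∑_{ω ∈ L_τ ∖ {0}} ω⁻⁴`. -/
def g2C (τ : ℍ) : ℂ := 60 * ∑' p : {p : ℤ × ℤ // p ≠ 0}, ((lat τ p.1) ^ 4)⁻¹

/-- `g₃(τ) = 140 ∑_{ω ∈ L_τ ∖ {0}} ω⁻⁶`. -/
def g3C (τ : ℍ) : ℂ := 140 * ∑' p : {p : ℤ × ℤ // p ≠ 0}, ((lat τ p.1) ^ 6)⁻¹

/-- The discriminant `Δ(τ) = g₂(τ)³ - 27 g₃(τ)²`. -/
def discC (τ : ℍ) : ℂ := g2C τ ^ 3 - 27 * g3C τ ^ 2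

/-- The Weierstrass `℘`-function relative to the lattice `L_τ = ℤτ + ℤ`. -/
def wpC (z : ℂ) (τ : ℍ) : ℂ :=
  (z ^ 2)⁻¹ + ∑' p : {p : ℤ × ℤ // p ≠ 0}, (((z - lat τ p.1) ^ 2)⁻¹ - ((lat τ p.1) ^ 2)⁻¹)

/-- The Fricke function `f_r(τ)`. -/
def fricke (r : ℚ × ℚ) (τ : ℍ) : ℂ :=
  -(2 ^ 7 * 3 ^ 5) * (g2C τ * g3C τ / discC τ) * wpC ((r.1 : ℂ) * τ + (r.2 : ℂ)) τ

/-- The elliptic modular `j`-invariant. -/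
def jinv (τ : ℍ) : ℂ := 1728 * g2C τ ^ 3 / discC τ

/-- The Dedekind eta function. -/
def etaC (τ : ℍ) : ℂ :=
  (Real.sqrt (2 * Real.pi) : ℂ) * Complex.exp (2 * (Real.pi : ℂ) * Complex.I / 16) *
    Complex.exp (2 * (Real.pi : ℂ) * Complex.I * τ / 24) *
    ∏' n : ℕ, (1 - Complex.exp (2 * (Real.pi : ℂ) * Complex.I * ((n : ℂ) + 1) * τ))

/-- `r ∈ ℚ² ∖ ℤ²`. -/
def NonIntegral (r : ℚ × ℚ) : Prop := ¬ ∃ a b : ℤ, r = ((a : ℚ), (b : ℚ))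

/-- `r ∈ (1/N)ℤ²`. -/
def InDen (N : ℕ) (r : ℚ × ℚ) : Prop := ∃ a b : ℤ, r = ((a : ℚ) / N, (b : ℚ) / N)

/-- Membership in `Γ^1(N)`: `a ≡ d ≡ 1` and `b ≡ 0 (mod N)`. -/
def GammaUpper (N : ℕ) (γ : SL(2, ℤ)) : Prop :=
  ((γ 0 0 : ℤ) : ZMod N) = 1 ∧ ((γ 1 1 : ℤ) : ZMod N) = 1 ∧ ((γ 0 1 : ℤ) : ZMod N) = 0

/-- The transpose action `ᵗγ r = (a r₁ + c r₂, b r₁ + d r₂)` of `γ = [[a,b],[c,d]]`. -/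
def tAct (γ : SL(2, ℤ)) (r : ℚ × ℚ) : ℚ × ℚ :=
  ((γ 0 0 : ℚ) * r.1 + (γ 1 0 : ℚ) * r.2, (γ 0 1 : ℚ) * r.1 + (γ 1 1 : ℚ) * r.2)

/-- The power `q^{n/d} = e^{2πi(n/d)τ}`. -/
def qpow (d : ℕ) (n : ℤ) (τ : ℍ) : ℂ :=
  Complex.exp (2 * (Real.pi : ℂ) * Complex.I * ((n : ℂ) / (d : ℂ)) * τ)

/-- `h` is a weakly holomorphic modular function for `Γ₁(N)` with rational
Fourier coefficients: holomorphic on `ℍ`, `Γ₁(N)`-invariant, with a convergent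
`q`-expansion at `i∞` having rational coefficients, and meromorphic at every cusp. -/
def IsWeaklyHolo1 (N : ℕ) (h : ℍ → ℂ) : Prop :=
  MDifferentiable 𝓘(ℂ) 𝓘(ℂ) h ∧
  (∀ γ ∈ Gamma1 N, ∀ τ : ℍ, h (γ • τ) = h τ) ∧
  (∃ n₀ : ℤ, ∃ c : ℕ → ℚ,
    ∀ τ : ℍ, HasSum (fun n : ℕ => (c n : ℂ) * qpow 1 (n₀ + n) τ) (h τ)) ∧
  (∀ γ : SL(2, ℤ), ∃ n₀ : ℤ, ∃ c : ℕ → ℂ,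
    ∀ τ : ℍ, HasSum (fun n : ℕ => c n * qpow N (n₀ + n) τ) (h (γ • τ)))

/-- `h` is a weakly holomorphic modular function for `Γ^1(N)` with rational
Fourier coefficients (the expansion at `i∞` being in powers of `q^{1/N}`). -/
def IsWeaklyHoloUp (N : ℕ) (h : ℍ → ℂ) : Prop :=
  MDifferentiable 𝓘(ℂ) 𝓘(ℂ) h ∧
  (∀ γ : SL(2, ℤ), GammaUpper N γ → ∀ τ : ℍ, h (γ • τ) = h τ) ∧
  (∃ n₀ : ℤ, ∃ c : ℕ → ℚ,
    ∀ τ : ℍ, HasSum (fun n : ℕ => (c n : ℂ) * qpow N (n₀ + n) τ) (h τ)) ∧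
  (∀ γ : SL(2, ℤ), ∃ n₀ : ℤ, ∃ c : ℕ → ℂ,
    ∀ τ : ℍ, HasSum (fun n : ℕ => c n * qpow N (n₀ + n) τ) (h (γ • τ)))

/-- The Weierstrass-unit generator
`f^1_{m,N} = (f_{(1/N,0)} - f_{(1/m,0)})/(f_{(2/m,0)} - f_{(1/m,0)})`. -/
def fUnit (m N : ℕ) (τ : ℍ) : ℂ :=
  (fricke ((1 : ℚ) / N, 0) τ - fricke ((1 : ℚ) / m, 0) τ) /
    (fricke ((2 : ℚ) / m, 0) τ - fricke ((1 : ℚ) / m, 0) τ)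


section Fricke4
open Filter Topology

/-- The period pair `(τ, 1)`. -/
def pp (τ : ℍ) : PeriodPair where
  ω₁ := τ
  ω₂ := 1
  indep := by
    rw [LinearIndependent.pair_iff]
    intro a b h
    have h1 := congrArg Complex.im h
    have h2 := congrArg Complex.re h
    have h3 : (τ : ℂ).im ≠ 0 := τ.im_ne_zero
    simp at h1 h2
    rcases h1 with h1 | h1
    · subst h1
      simpa using h2
    · exact absurd h1 h3

lemma lat_mem (τ : ℍ) (p : ℤ × ℤ) : lat τ p ∈ (pp τ).lattice := by
  rw [PeriodPair.mem_lattice]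
  exact ⟨p.1, p.2, by simp [lat, pp]⟩

lemma pp_symm (τ : ℍ) (p : ℤ × ℤ) : (((pp τ).latticeEquivProd.symm p : (pp τ).lattice) : ℂ) = lat τ p := by
  rw [PeriodPair.latticeEquiv_symm_apply]
  simp [lat, pp]

lemma hasSum_all (z : ℂ) (τ : ℍ) :
    HasSum (fun p : ℤ × ℤ => ((z - lat τ p) ^ 2)⁻¹ - ((lat τ p) ^ 2)⁻¹) ((pp τ).weierstrassP z) := by
  have h := (pp τ).hasSum_weierstrassP z
  rw [← (pp τ).latticeEquivProd.symm.toEquiv.hasSum_iff] at h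
  convert! h using 2 with p
  simp [← pp_symm]

lemma tsum_ne_zero (f : ℤ × ℤ → ℂ) (hf : Summable f) :
    ∑' p : {p : ℤ × ℤ // p ≠ 0}, f p.1 = ∑' p, f p - f 0 := by
  have h := hf.sum_add_tsum_subtype_compl {0}
  have h2 : ∑' p : {p : ℤ × ℤ // p ≠ 0}, f p.1 =
      ∑' p : {p : ℤ × ℤ // p ∉ ({0} : Finset (ℤ × ℤ))}, f p.1 := by
    refine (Equiv.subtypeEquivRight (fun p => ?_)).tsum_eq
      (fun p : {p : ℤ × ℤ // p ∉ ({0} : Finset (ℤ × ℤ))} => f p.1)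
    simp
  rw [h2, ← h]
  simp

lemma wpC_eq_tsum (z : ℂ) (τ : ℍ) :
    wpC z τ = ∑' p : ℤ × ℤ, (((z - lat τ p) ^ 2)⁻¹ - ((lat τ p) ^ 2)⁻¹) := by
  rw [wpC, tsum_ne_zero _ (hasSum_all z τ).summable]
  simp [lat]

lemma wpC_eq (z : ℂ) (τ : ℍ) : wpC z τ = (pp τ).weierstrassP z := by
  rw [wpC_eq_tsum, (hasSum_all z τ).tsum_eq]

lemma wpC_neg (z : ℂ) (τ : ℍ) : wpC (-z) τ = wpC z τ := by
  simp [wpC_eq]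

lemma wpC_add (z : ℂ) (τ : ℍ) (a b : ℤ) : wpC (z + (a * τ + b)) τ = wpC z τ := by
  rw [wpC_eq, wpC_eq]
  exact (pp τ).weierstrassP_add_coe z ⟨_, lat_mem τ (a, b)⟩

/-- `℘` at the division point `r`. -/
def wr (r : ℚ × ℚ) (τ : ℍ) : ℂ := wpC ((r.1 : ℂ) * τ + (r.2 : ℂ)) τ

lemma wr_neg (r : ℚ × ℚ) (τ : ℍ) : wr (-r) τ = wr r τ := by
  unfold wr
  rw [← wpC_neg]
  congr 1
  simp
  ring

lemma wr_add (r : ℚ × ℚ) (a b : ℤ) (τ : ℍ) : wr (r + ((a : ℚ), (b : ℚ))) τ = wr r τ := by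
  unfold wr
  rw [← wpC_add ((r.1 : ℂ) * τ + (r.2 : ℂ)) τ a b]
  congr 1
  simp
  ring

lemma wr_congr {r s : ℚ × ℚ} (h : (∃ a b : ℤ, r - s = ((a : ℚ), (b : ℚ))) ∨
       (∃ a b : ℤ, r + s = ((a : ℚ), (b : ℚ)))) (τ : ℍ) : wr r τ = wr s τ := by
  rcases h with ⟨a, b, h⟩ | ⟨a, b, h⟩
  · rw [show r = s + ((a : ℚ), (b : ℚ)) by rw [← h]; abel, wr_add]
  · rw [show r = -s + ((a : ℚ), (b : ℚ)) by rw [← h]; abel, wr_add, wr_neg]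

lemma fricke_eq (r : ℚ × ℚ) (τ : ℍ) :
  fricke r τ = -(2 ^ 7 * 3 ^ 5) * (g2C τ * g3C τ / discC τ) * wr r τ := rfl

lemma gsum_eq (k : ℕ) (hk : 3 ≤ k) (τ : ℍ) :
    ∑' p : {p : ℤ × ℤ // p ≠ 0}, ((lat τ p.1) ^ k)⁻¹ =
      2 * riemannZeta k * ModularForm.E hk τ := by
  have h1 := summable_prod_eisSummand hk τ
  have h3 := tsum_eisSummand_eq_riemannZeta_mul_eisensteinSeries hk τ
  rw [← (finTwoArrowEquiv ℤ).symm.tsum_eq] at h3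
  have h4 : ModularForm.E hk τ = (1 / 2 : ℂ) • eisensteinSeries (N := 1) 0 k τ := rfl
  have hk0 : k ≠ 0 := by lia
  have h5 : ∀ p : ℤ × ℤ, ((lat τ p) ^ k)⁻¹ = EisensteinSeries.eisSummand k ![p.1, p.2] τ := by
    intro p
    simp [EisensteinSeries.eisSummand, lat]
  have h6 := tsum_ne_zero _ h1
  simp_rw [h5]
  rw [h6, h4]
  simp only [finTwoArrowEquiv_symm_apply] at h3
  rw [h3]
  simp [EisensteinSeries.eisSummand, hk0]
  ring

lemma riemannZeta_six : riemannZeta 6 = π ^ 6 / 945 := by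
  have := riemannZeta_two_mul_nat (k := 3) (by norm_num)
  have hb : bernoulli 6 = 1 / 42 := by decide +kernel
  norm_num [Nat.factorial, hb] at this
  rw [this]; ring

lemma g2C_eq (τ : ℍ) : g2C τ = 4 / 3 * π ^ 4 * ModularForm.E₄ τ := by
  rw [g2C, gsum_eq 4 (by norm_num)]
  push_cast
  rw [riemannZeta_four]
  ring

lemma g3C_eq (τ : ℍ) : g3C τ = 8 / 27 * π ^ 6 * ModularForm.E₆ τ := by
  rw [g3C, gsum_eq 6 (by norm_num)]
  push_cast
  rw [riemannZeta_six]
  ring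

lemma discC_ne (τ : ℍ) : discC τ ≠ 0 := by
  have h := ModularForm.discriminant_ne_zero τ
  rw [ModularForm.discriminant_eq_E₄_cube_sub_E₆_sq] at h
  have : discC τ = 4096 * π ^ 12 * ((ModularForm.E₄ τ ^ 3 - ModularForm.E₆ τ ^ 2) / 1728) := by
    rw [discC, g2C_eq, g3C_eq]
    ring
  rw [this]
  have : (π : ℂ) ≠ 0 := by exact_mod_cast Real.pi_ne_zero
  exact mul_ne_zero (mul_ne_zero (by norm_num) (pow_ne_zero _ this)) h

lemma mdiff_of (r : ℚ × ℚ) (hf : MDifferentiable 𝓘(ℂ) 𝓘(ℂ) (wr r)) :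
    MDifferentiable 𝓘(ℂ) 𝓘(ℂ) (fricke r) := by
  have h4 : MDifferentiable 𝓘(ℂ) 𝓘(ℂ) (ModularForm.E₄ : ℍ → ℂ) := ModularForm.E₄.holo'
  have h6 : MDifferentiable 𝓘(ℂ) 𝓘(ℂ) (ModularForm.E₆ : ℍ → ℂ) := ModularForm.E₆.holo'
  rw [UpperHalfPlane.mdifferentiable_iff] at *
  have e2 : DifferentiableOn ℂ (g2C ∘ ofComplex) {z | 0 < z.im} := by
    have : g2C ∘ ofComplex = fun z => 4 / 3 * π ^ 4 * (ModularForm.E₄ ∘ ofComplex) z := by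
      ext z; simp [g2C_eq]
    rw [this]; exact h4.const_mul _
  have e3 : DifferentiableOn ℂ (g3C ∘ ofComplex) {z | 0 < z.im} := by
    have : g3C ∘ ofComplex = fun z => 8 / 27 * π ^ 6 * (ModularForm.E₆ ∘ ofComplex) z := by
      ext z; simp [g3C_eq]
    rw [this]; exact h6.const_mul _
  have ed : DifferentiableOn ℂ (discC ∘ ofComplex) {z | 0 < z.im} :=
    (e2.pow 3).sub ((e3.pow 2).const_mul 27)
  exact (((e2.mul e3).div ed (fun x _ => discC_ne _)).const_mul _).mul hf

lemma lower_bd (τ : ℍ) (x y : ℝ) :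
    EisensteinSeries.r τ * |x| ≤ ‖(x : ℂ) * τ + y‖ ∧ EisensteinSeries.r τ * |y| ≤ ‖(x : ℂ) * τ + y‖ := by
  constructor
  · rcases eq_or_ne x 0 with rfl | hx
    · simp
    have h := EisensteinSeries.auxbound1 τ (c := 1) (y / x) (by norm_num)
    have h2 : (x : ℂ) * τ + y = x * (((1 : ℝ) : ℂ) * τ + ((y / x : ℝ) : ℂ)) := by
      have : (x : ℂ) ≠ 0 := by exact_mod_cast hx
      push_cast
      field_simp
    rw [h2, norm_mul, Complex.norm_real, Real.norm_eq_abs, mul_comm]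
    gcongr
  · rcases eq_or_ne y 0 with rfl | hy
    · simp
      positivity
    have h := EisensteinSeries.auxbound2 τ (x / y) (d := 1) (by norm_num)
    have h2 : (x : ℂ) * τ + y = y * (((x / y : ℝ) : ℂ) * τ + ((1 : ℝ) : ℂ)) := by
      have : (y : ℂ) ≠ 0 := by exact_mod_cast hy
      push_cast
      field_simp
    rw [h2, norm_mul, Complex.norm_real, Real.norm_eq_abs, mul_comm]
    gcongr

lemma delta_bd {x : ℝ} (hx0 : 0 ≤ x) (hx1 : x < 1) (n : ℤ) : (1 - x) * |(n : ℝ)| ≤ |x - n| := by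
  rcases lt_trichotomy n 0 with h | rfl | h
  · have : (n : ℝ) ≤ -1 := by exact_mod_cast (by lia : n ≤ -1)
    rw [abs_of_neg (by linarith), abs_of_pos (by linarith)]
    nlinarith
  · simp
  · have : (1 : ℝ) ≤ n := by exact_mod_cast h
    rw [abs_of_pos (by linarith), abs_of_neg (by linarith)]
    nlinarith

lemma term_bd {z w : ℂ} {M : ℝ} (hM : 0 < M) (h1 : M ≤ ‖w‖) (h2 : M ≤ ‖z - w‖) :
    ‖((z - w) ^ 2)⁻¹ - (w ^ 2)⁻¹‖ ≤ 2 * ‖z‖ / M ^ 3 := by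
  have hw : 0 < ‖w‖ := hM.trans_le h1
  have hzw : 0 < ‖z - w‖ := hM.trans_le h2
  have hw' : w ≠ 0 := norm_pos_iff.mp hw
  have hzw' : z - w ≠ 0 := norm_pos_iff.mp hzw
  have e : ((z - w) ^ 2)⁻¹ - (w ^ 2)⁻¹ =
      z * (w⁻¹ * ((z - w)⁻¹ ^ 2) * (1) - w⁻¹ ^ 2 * (z - w)⁻¹) := by
    field_simp
    ring
  have i1 : ‖w‖⁻¹ ≤ M⁻¹ := by gcongr
  have i2 : ‖z - w‖⁻¹ ≤ M⁻¹ := by gcongr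
  calc _ ≤ ‖z‖ * (‖w‖⁻¹ * ‖z - w‖⁻¹ ^ 2 + ‖w‖⁻¹ ^ 2 * ‖z - w‖⁻¹) := by
        rw [e, norm_mul]
        gcongr
        refine (norm_sub_le _ _).trans ?_
        simp
    _ ≤ ‖z‖ * (M⁻¹ * M⁻¹ ^ 2 + M⁻¹ ^ 2 * M⁻¹) := by gcongr
    _ = 2 * ‖z‖ / M ^ 3 := by field_simp; ring

lemma summable_norm3 : Summable (fun p : {p : ℤ × ℤ // p ≠ 0} => (‖![p.1.1, p.1.2]‖ ^ 3)⁻¹) := by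
  have h := EisensteinSeries.summable_one_div_norm_rpow (k := 3) (by norm_num)
  rw [← (finTwoArrowEquiv ℤ).symm.summable_iff] at h
  refine (h.subtype {p | p ≠ 0}).congr (fun p => ?_)
  simp only [Function.comp, finTwoArrowEquiv_symm_apply]
  rw [Real.rpow_neg (norm_nonneg _)]
  norm_num

lemma wr_mdiff_aux (r : ℚ × ℚ) (h1 : 0 ≤ r.1) (h1' : r.1 < 1) (h2 : 0 ≤ r.2) (h2' : r.2 < 1)
    (hr : r ≠ 0) : MDifferentiable 𝓘(ℂ) 𝓘(ℂ) (wr r) := by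
  rw [UpperHalfPlane.mdifferentiable_iff]
  have hx0 : (0 : ℝ) ≤ r.1 := by exact_mod_cast h1
  have hx1 : (r.1 : ℝ) < 1 := by exact_mod_cast h1'
  have hy0 : (0 : ℝ) ≤ r.2 := by exact_mod_cast h2
  have hy1 : (r.2 : ℝ) < 1 := by exact_mod_cast h2'
  have ne0 : ∀ τ : ℍ, ∀ x y : ℝ, (x ≠ 0 ∨ y ≠ 0) → (x : ℂ) * τ + y ≠ 0 := by
    intro τ x y hxy h0
    have hb := lower_bd τ x y
    rw [h0, norm_zero] at hb
    have hp := EisensteinSeries.r_pos τ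
    rcases hxy with h | h
    · exact absurd hb.1 (not_le.mpr (mul_pos hp (abs_pos.mpr h)))
    · exact absurd hb.2 (not_le.mpr (mul_pos hp (abs_pos.mpr h)))
  set δ : ℝ := min (1 - r.1) (1 - r.2) with hδ
  have hδ0 : 0 < δ := lt_min (by linarith) (by linarith)
  have hδ1 : δ ≤ 1 := (min_le_left _ _).trans (by linarith)
  intro w0 hw0
  have hw0' : 0 < w0.im := hw0
  set A := |w0.re| + 1 with hA
  set B := w0.im / 2 with hB
  have hBpos : 0 < B := by positivity
  set R := ‖w0‖ + 1 with hR
  set ρ := EisensteinSeries.r ⟨⟨A, B⟩, hBpos⟩ with hρ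
  have hρ0 : 0 < ρ := EisensteinSeries.r_pos _
  set U : Set ℂ := {w | |w.re| < A ∧ B < w.im ∧ ‖w‖ < R} with hU
  have hUo : IsOpen U := by
    have o1 : IsOpen {w : ℂ | |w.re| < A} := isOpen_lt (by fun_prop) (by fun_prop)
    have o2 : IsOpen {w : ℂ | B < w.im} := isOpen_lt (by fun_prop) (by fun_prop)
    have o3 : IsOpen {w : ℂ | ‖w‖ < R} := isOpen_lt (by fun_prop) (by fun_prop)
    exact o1.inter (o2.inter o3)
  have hw0U : w0 ∈ U := ⟨by simp [hA], by simp only [hB]; linarith, by simp [hR]⟩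
  have hUpos : ∀ w ∈ U, 0 < w.im := fun w hw => hBpos.trans hw.2.1
  let F : {p : ℤ × ℤ // p ≠ 0} → ℂ → ℂ := fun p w =>
    (((r.1 : ℂ) * w + r.2 - (p.1.1 * w + p.1.2)) ^ 2)⁻¹ - ((p.1.1 * w + p.1.2) ^ 2)⁻¹
  have key : ∀ p : {p : ℤ × ℤ // p ≠ 0}, ∀ w ∈ U,
      0 < ‖![p.1.1, p.1.2]‖ ∧
      ρ * δ * ‖![p.1.1, p.1.2]‖ ≤ ‖(p.1.1 : ℂ) * w + p.1.2‖ ∧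
      ρ * δ * ‖![p.1.1, p.1.2]‖ ≤ ‖(r.1 : ℂ) * w + r.2 - (p.1.1 * w + p.1.2)‖ := by
    rintro ⟨⟨m, n⟩, hp⟩ w hw
    lift w to ℍ using hUpos w hw
    have hmem : w ∈ verticalStrip A B := ⟨hw.1.le, hw.2.1.le⟩
    have hle : ρ ≤ EisensteinSeries.r w := EisensteinSeries.r_lower_bound_on_verticalStrip w hBpos hmem
    have hr0 : 0 ≤ EisensteinSeries.r w := (EisensteinSeries.r_pos w).le
    have b1 := lower_bd w m n
    have b2 := lower_bd w (r.1 - m) (r.2 - n)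
    have d1 := delta_bd hx0 hx1 m
    have d2 := delta_bd hy0 hy1 n
    have e1 : δ * |(m : ℝ)| ≤ |(r.1 : ℝ) - m| := by
      refine le_trans ?_ d1
      gcongr
      exact min_le_left _ _
    have e2 : δ * |(n : ℝ)| ≤ |(r.2 : ℝ) - n| := by
      refine le_trans ?_ d2
      gcongr
      exact min_le_right _ _
    push_cast at b1 b2
    have eq2 : (r.1 : ℂ) * w + r.2 - (m * w + n) = ((r.1 : ℂ) - m) * w + (r.2 - n) := by ring
    refine ⟨?_, ?_⟩
    · rw [norm_pos_iff]
      intro h0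
      apply hp
      have a1 := congrFun h0 0
      have a2 := congrFun h0 1
      simp at a1 a2
      simp [a1, a2]
    · simp only
      rw [eq2, EisensteinSeries.norm_eq_max_natAbs]
      simp only [Matrix.cons_val_zero, Matrix.cons_val_one, Nat.cast_max, Nat.cast_natAbs, Int.cast_abs]
      rcases max_choice |(m : ℝ)| |(n : ℝ)| with h | h <;> rw [h]
      · constructor
        · calc ρ * δ * |(m : ℝ)| ≤ EisensteinSeries.r w * 1 * |(m : ℝ)| := mul_le_mul_of_nonneg_right (mul_le_mul hle hδ1 hδ0.le hr0) (abs_nonneg _)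
            _ ≤ _ := by rw [mul_one]; exact b1.1
        · calc ρ * δ * |(m : ℝ)| = ρ * (δ * |(m : ℝ)|) := by ring
            _ ≤ EisensteinSeries.r w * |(r.1 : ℝ) - m| := mul_le_mul hle e1 (by positivity) hr0
            _ ≤ _ := b2.1
      · constructor
        · calc ρ * δ * |(n : ℝ)| ≤ EisensteinSeries.r w * 1 * |(n : ℝ)| := mul_le_mul_of_nonneg_right (mul_le_mul hle hδ1 hδ0.le hr0) (abs_nonneg _)
            _ ≤ _ := by rw [mul_one]; exact b1.2
        · calc ρ * δ * |(n : ℝ)| = ρ * (δ * |(n : ℝ)|) := by ring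
            _ ≤ EisensteinSeries.r w * |(r.2 : ℝ) - n| := mul_le_mul hle e2 (by positivity) hr0
            _ ≤ _ := b2.2
  have hD : DifferentiableOn ℂ (fun w => ∑' p, F p w) U := by
    refine differentiableOn_tsum_of_summable_norm
      (u := fun p => (2 * (R + 1) / (ρ * δ) ^ 3) * (‖![p.1.1, p.1.2]‖ ^ 3)⁻¹)
      (summable_norm3.mul_left _) ?_ hUo ?_
    · intro p w hw
      obtain ⟨k0, k1, k2⟩ := key p w hw
      have p0 : 0 < ρ * δ * ‖![p.1.1, p.1.2]‖ := by positivity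
      have n1 := norm_pos_iff.mp (p0.trans_le k1)
      have n2 := norm_pos_iff.mp (p0.trans_le k2)
      apply DifferentiableAt.differentiableWithinAt
      simp only [F]
      fun_prop (disch := first | exact pow_ne_zero _ n1 | exact pow_ne_zero _ n2)
    · intro p w hw
      obtain ⟨k0, k1, k2⟩ := key p w hw
      have p0 : 0 < ρ * δ * ‖![p.1.1, p.1.2]‖ := by positivity
      refine (term_bd p0 k1 k2).trans ?_
      have hz : ‖(r.1 : ℂ) * w + r.2‖ ≤ R + 1 := by
        refine (norm_add_le _ _).trans ?_
        rw [norm_mul]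
        have q1 : ‖(r.1 : ℂ)‖ = r.1 := by
          rw [← Complex.ofReal_ratCast, Complex.norm_real, Real.norm_of_nonneg hx0]
        have q2 : ‖(r.2 : ℂ)‖ = r.2 := by
          rw [← Complex.ofReal_ratCast, Complex.norm_real, Real.norm_of_nonneg hy0]
        rw [q1, q2]
        nlinarith [hw.2.2, norm_nonneg w]
      rw [mul_pow, ← div_eq_mul_inv, div_div]
      gcongr
  have hz0 : DifferentiableOn ℂ (fun w : ℂ => (((r.1 : ℂ) * w + r.2) ^ 2)⁻¹) U := by
    intro w hw
    have := ne0 ⟨w, hUpos w hw⟩ r.1 r.2 (by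
      by_contra hcon
      push Not at hcon
      apply hr
      ext
      · simpa using hcon.1
      · simpa using hcon.2)
    simp only [Complex.ofReal_ratCast] at this
    apply DifferentiableAt.differentiableWithinAt
    fun_prop (disch := exact pow_ne_zero _ this)
  have hfin : DifferentiableOn ℂ (wr r ∘ ofComplex) U := (hz0.add hD).congr (by
    intro w hw
    simp [wr, wpC, ofComplex_apply_of_im_pos (hUpos w hw), lat, F])
  exact (hfin.differentiableAt (hUo.mem_nhds hw0U)).differentiableWithinAt

lemma exists_reduce (r : ℚ × ℚ) (hr : NonIntegral r) : ∃ t : ℚ × ℚ,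
    (∃ a b : ℤ, r - t = ((a : ℚ), (b : ℚ))) ∧ 0 ≤ t.1 ∧ t.1 < 1 ∧ 0 ≤ t.2 ∧ t.2 < 1 ∧ t ≠ 0 := by
  refine ⟨(Int.fract r.1, Int.fract r.2), ⟨⌊r.1⌋, ⌊r.2⌋, ?_⟩, Int.fract_nonneg _, Int.fract_lt_one _,
    Int.fract_nonneg _, Int.fract_lt_one _, ?_⟩
  · ext <;> simp
  · intro h
    apply hr
    simp only [Prod.mk_eq_zero, Int.fract_eq_iff] at h
    obtain ⟨⟨_, _, a, ha⟩, ⟨_, _, b, hb⟩⟩ := h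
    exact ⟨a, b, by ext <;> simp <;> linarith⟩

lemma wr_mdiff (r : ℚ × ℚ) (hr : NonIntegral r) : MDifferentiable 𝓘(ℂ) 𝓘(ℂ) (wr r) := by
  obtain ⟨t, ht, h1, h2, h3, h4, h5⟩ := exists_reduce r hr
  rw [show wr r = wr t from funext (wr_congr (Or.inl ht))]
  exact wr_mdiff_aux t h1 h2 h3 h4 h5

/-- The right action of a matrix on pairs of integers. -/
def matEquiv (γ : SL(2, ℤ)) : ℤ × ℤ ≃ ℤ × ℤ where
  toFun p := (p.1 * γ 0 0 + p.2 * γ 1 0, p.1 * γ 0 1 + p.2 * γ 1 1)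
  invFun p := (p.1 * γ 1 1 - p.2 * γ 1 0, -p.1 * γ 0 1 + p.2 * γ 0 0)
  left_inv p := by
    have h := γ.det_coe
    rw [Matrix.det_fin_two] at h
    ext
    · simp only; linear_combination p.1 * h
    · simp only; linear_combination p.2 * h
  right_inv p := by
    have h := γ.det_coe
    rw [Matrix.det_fin_two] at h
    ext
    · simp only; linear_combination p.1 * h
    · simp only; linear_combination p.2 * h

lemma den_ne (γ : SL(2, ℤ)) (τ : ℍ) : ((γ 1 0 : ℤ) : ℂ) * τ + (γ 1 1 : ℤ) ≠ 0 := by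
  have := UpperHalfPlane.denom_ne_zero (γ : GL (Fin 2) ℝ) τ
  simpa [UpperHalfPlane.denom] using this

lemma smul_coe_eq (γ : SL(2, ℤ)) (τ : ℍ) : ((γ • τ : ℍ) : ℂ) =
    ((γ 0 0 : ℤ) * (τ : ℂ) + (γ 0 1 : ℤ)) / ((γ 1 0 : ℤ) * (τ : ℂ) + (γ 1 1 : ℤ)) := by
  rw [UpperHalfPlane.coe_specialLinearGroup_apply]
  simp

lemma lat_smul (γ : SL(2, ℤ)) (τ : ℍ) (p : ℤ × ℤ) :
    lat (γ • τ) p = lat τ (matEquiv γ p) / ((γ 1 0 : ℤ) * (τ : ℂ) + (γ 1 1 : ℤ)) := by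
  have := den_ne γ τ
  simp only [lat, matEquiv, smul_coe_eq, Equiv.coe_fn_mk]
  rw [eq_div_iff this, add_mul, mul_assoc, div_mul_cancel₀ _ this]
  push_cast
  ring

lemma wr_smul (γ : SL(2, ℤ)) (r : ℚ × ℚ) (τ : ℍ) :
    wr r (γ • τ) = ((γ 1 0 : ℤ) * (τ : ℂ) + (γ 1 1 : ℤ)) ^ 2 * wr (tAct γ r) τ := by
  have hj := den_ne γ τ
  set j := ((γ 1 0 : ℤ) * (τ : ℂ) + (γ 1 1 : ℤ)) with hjd
  rw [wr, wr, wpC_eq_tsum, wpC_eq_tsum, ← tsum_mul_left]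
  refine Eq.trans ?_ ((matEquiv γ).tsum_eq _)
  refine tsum_congr (fun p => ?_)
  have hz : (r.1 : ℂ) * (γ • τ : ℍ) + r.2 = (((tAct γ r).1 : ℂ) * τ + (tAct γ r).2) / j := by
    rw [smul_coe_eq, ← hjd, eq_div_iff hj, add_mul, mul_assoc, div_mul_cancel₀ _ hj, hjd]
    simp only [tAct]
    push_cast
    ring
  rw [lat_smul, hz, ← hjd, ← sub_div, div_pow, div_pow, inv_div, inv_div, mul_sub]
  rfl

lemma tsum_lat (k : ℕ) (hk : k ≠ 0) (τ : ℍ) :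
    ∑' p : {p : ℤ × ℤ // p ≠ 0}, ((lat τ p.1) ^ k)⁻¹ = ∑' p : ℤ × ℤ, ((lat τ p) ^ k)⁻¹ := by
  apply tsum_subtype_eq_of_support_subset (f := fun p : ℤ × ℤ => ((lat τ p) ^ k)⁻¹) (s := {p | p ≠ 0})
  intro p hp h0
  simp only [Function.mem_support] at hp
  apply hp
  have : p = 0 := by simpa using h0
  simp [this, lat, hk]

lemma tsum_lat_smul (γ : SL(2, ℤ)) (k : ℕ) (τ : ℍ) :
    ∑' p : ℤ × ℤ, ((lat (γ • τ) p) ^ k)⁻¹ =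
    ((γ 1 0 : ℤ) * (τ : ℂ) + (γ 1 1 : ℤ)) ^ k * ∑' p : ℤ × ℤ, ((lat τ p) ^ k)⁻¹ := by
  rw [← tsum_mul_left]
  refine Eq.trans ?_ ((matEquiv γ).tsum_eq _)
  refine tsum_congr (fun p => ?_)
  rw [lat_smul, div_pow, inv_div]
  rfl

lemma g2C_smul (γ : SL(2, ℤ)) (τ : ℍ) (h : g2C τ ≠ 0) : g2C (γ • τ) ≠ 0 := by
  rw [g2C, tsum_lat 4 (by norm_num)] at *
  rw [tsum_lat_smul]
  have := den_ne γ τ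
  simp_all

lemma g3C_smul (γ : SL(2, ℤ)) (τ : ℍ) (h : g3C τ ≠ 0) : g3C (γ • τ) ≠ 0 := by
  rw [g3C, tsum_lat 6 (by norm_num)] at *
  rw [tsum_lat_smul]
  have := den_ne γ τ
  simp_all

lemma wr_eq_of (γ : SL(2, ℤ)) (r s : ℚ × ℚ) (h : ∀ τ, fricke r τ = fricke s τ) (τ : ℍ)
    (h2 : g2C τ ≠ 0) (h3 : g3C τ ≠ 0) : wr (tAct γ r) τ = wr (tAct γ s) τ := by
  have h := h (γ • τ)
  have h2 := g2C_smul γ τ h2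
  have h3 := g3C_smul γ τ h3
  have hd := discC_ne (γ • τ)
  rw [fricke_eq, fricke_eq] at h
  have hc : (-(2 ^ 7 * 3 ^ 5) * (g2C (γ • τ) * g3C (γ • τ) / discC (γ • τ)) : ℂ) ≠ 0 :=
    mul_ne_zero (by norm_num) (div_ne_zero (mul_ne_zero h2 h3) hd)
  have h := mul_left_cancel₀ hc h
  rw [wr_smul, wr_smul] at h
  exact mul_left_cancel₀ (pow_ne_zero _ (den_ne γ τ)) h

lemma tAct_inv (γ : SL(2, ℤ)) (r : ℚ × ℚ) :
    r.1 = (γ 1 1 : ℤ) * (tAct γ r).1 - (γ 1 0 : ℤ) * (tAct γ r).2 ∧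
    r.2 = -(γ 0 1 : ℤ) * (tAct γ r).1 + (γ 0 0 : ℤ) * (tAct γ r).2 := by
  have h := γ.det_coe
  rw [Matrix.det_fin_two] at h
  have h : ((γ 0 0 : ℤ) : ℚ) * (γ 1 1 : ℤ) - (γ 0 1 : ℤ) * (γ 1 0 : ℤ) = 1 := by exact_mod_cast h
  simp only [tAct]
  constructor
  · linear_combination -r.1 * h
  · linear_combination -r.2 * h

lemma tAct_int (γ : SL(2, ℤ)) (r : ℚ × ℚ) (h : ∃ a b : ℤ, tAct γ r = ((a : ℚ), (b : ℚ))) :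
    ∃ a b : ℤ, r = ((a : ℚ), (b : ℚ)) := by
  obtain ⟨a, b, h⟩ := h
  have := tAct_inv γ r
  rw [h] at this
  refine ⟨γ 1 1 * a - γ 1 0 * b, - γ 0 1 * a + γ 0 0 * b, ?_⟩
  ext
  · rw [this.1]; push_cast; rfl
  · rw [this.2]; push_cast; rfl

lemma tAct_sub (γ : SL(2, ℤ)) (r s : ℚ × ℚ) : tAct γ (r - s) = tAct γ r - tAct γ s := by
  ext <;> simp [tAct] <;> ring

lemma tAct_add (γ : SL(2, ℤ)) (r s : ℚ × ℚ) : tAct γ (r + s) = tAct γ r + tAct γ s := by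
  ext <;> simp [tAct] <;> ring

lemma exists_gamma (r : ℚ × ℚ) (hr : NonIntegral r) : ∃ γ : SL(2, ℤ), (tAct γ r).1 = 0 := by
  set x : ℤ := r.1.num * r.2.den with hx
  set y : ℤ := r.2.num * r.1.den with hy
  have d1 : (r.1.den : ℚ) ≠ 0 := by exact_mod_cast r.1.den_nz
  have d2 : (r.2.den : ℚ) ≠ 0 := by exact_mod_cast r.2.den_nz
  have e1 : r.1 * (r.1.den * r.2.den) = x := by
    rw [hx]; push_cast; rw [← mul_assoc, Rat.mul_den_eq_num]
  have e2 : r.2 * (r.1.den * r.2.den) = y := by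
    rw [hy]; push_cast; rw [mul_comm (r.1.den : ℚ), ← mul_assoc, Rat.mul_den_eq_num]
  have hne : x ≠ 0 ∨ y ≠ 0 := by
    by_contra hcon
    push Not at hcon
    apply hr
    refine ⟨0, 0, ?_⟩
    rw [hcon.1] at e1
    rw [hcon.2] at e2
    ext
    · simpa [d1, d2] using e1
    · simpa [d1, d2] using e2
  obtain ⟨g, x', y', hg, hcop, hx', hy'⟩ : ∃ g x' y' : ℤ, g ≠ 0 ∧ IsCoprime x' y' ∧
      x = x' * g ∧ y = y' * g := by
    have hg : 0 < Int.gcd x y := Int.gcd_pos_iff.mpr hne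
    obtain ⟨x', y', h1, h2, h3⟩ := Int.exists_gcd_one hg
    exact ⟨Int.gcd x y, x', y', by exact_mod_cast hg.ne', Int.isCoprime_iff_gcd_eq_one.mpr h1, h2, h3⟩
  obtain ⟨γ, h1, h2⟩ := (hcop.symm.neg_right).exists_SL2_col 0
  refine ⟨γ, ?_⟩
  simp only [tAct, h1, h2]
  have : (((y' : ℤ) : ℚ) * r.1 + ((-x' : ℤ) : ℚ) * r.2) * ((r.1.den * r.2.den) * g) = 0 := by
    rw [hx'] at e1
    rw [hy'] at e2
    push_cast at *
    linear_combination y' * g * e1 - x' * g * e2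
  have hg' : (g : ℚ) ≠ 0 := by exact_mod_cast hg
  exact (mul_eq_zero.mp this).resolve_right (by positivity)

lemma tendsto_E (k : ℕ) (hk : 3 ≤ k) (hk2 : Even k) :
    Tendsto (ModularForm.E hk) atImInfty (𝓝 1) := by
  have h1 : valueAtInfty (ModularForm.E hk) = 1 := by
    rw [← EisensteinSeries.E_qExpansion_coeff_zero hk hk2, qExpansion_coeff_zero one_pos]
    · exact ModularFormClass.analyticAt_cuspFunction_zero _ one_pos (by simp)
    · exact SlashInvariantFormClass.periodic_comp_ofComplex _ (by simp)
  obtain ⟨c, hc, h2⟩ := ModularFormClass.exp_decay_sub_atImInfty' (ModularForm.E hk)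
  rw [h1] at h2
  have h3 : Tendsto (fun τ : ℍ => Real.exp (-c * τ.im)) atImInfty (𝓝 0) := by
    apply Real.tendsto_exp_atBot.comp
    have : Tendsto (fun τ : ℍ => τ.im) atImInfty atTop := tendsto_comap
    exact this.const_mul_atTop_of_neg (by linarith)
  have h4 := (h2.trans_tendsto h3).add_const 1
  simpa using h4

/-- The limit sum. -/
def SS (x : ℝ) : ℝ := ∑' n : ℤ, ((x - n) ^ 2)⁻¹

lemma summable_SS (x : ℝ) : Summable (fun n : ℤ => ((x - n) ^ 2)⁻¹) := by
  have h := EisensteinSeries.linear_right_summable (-x : ℂ) 1 (k := 2) (by norm_num)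
  rw [← Complex.summable_ofReal]
  refine h.congr (fun n => ?_)
  push_cast
  congr 1
  norm_cast
  ring

lemma SS_pos {x : ℝ} (h0 : 0 < x) : 0 < SS x := by
  refine (summable_SS x).tsum_pos (fun n => by positivity) 0 ?_
  simp only [Int.cast_zero, sub_zero]
  positivity

lemma SS_symm (x : ℝ) : SS (1 - x) = SS x := by
  rw [SS, SS, ← (Equiv.subLeft (1 : ℤ)).tsum_eq]
  refine tsum_congr (fun n => ?_)
  simp only [Equiv.subLeft_apply]
  push_cast
  congr 1
  ring

lemma sq_conv {u v s t : ℝ} (hu : 0 < u) (hv : 0 < v) (huv : u ≠ v) (hs : 0 < s) (ht : 0 < t)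
    (hst : s + t = 1) : ((s * u + t * v) ^ 2)⁻¹ < s * (u ^ 2)⁻¹ + t * (v ^ 2)⁻¹ := by
  have := (strictConvexOn_zpow (m := -2) (by norm_num) (by norm_num)).2
    (Set.mem_Ioi.mpr hu) (Set.mem_Ioi.mpr hv) huv hs ht hst
  simp only [_root_.zpow_neg, smul_eq_mul] at this
  exact_mod_cast this

lemma SS_lt {a b : ℝ} (h0 : 0 < a) (hab : a < b) (hb : b < 1 - a) : SS b < SS a := by
  set s := (1 - a - b) / (1 - 2 * a) with hs
  set t := (b - a) / (1 - 2 * a) with ht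
  have hd : 0 < 1 - 2 * a := by linarith
  have hd0 : 1 - 2 * a ≠ 0 := hd.ne'
  have hs0 : 0 < s := div_pos (by linarith) hd
  have ht0 : 0 < t := div_pos (by linarith) hd
  have hst : s + t = 1 := by
    rw [hs, ht, ← add_div, div_eq_one_iff_eq hd0]; ring
  have hbe : b = s * a + t * (1 - a) := by
    have es : s * (1 - 2 * a) = 1 - a - b := div_mul_cancel₀ _ hd0
    have et : t * (1 - 2 * a) = b - a := div_mul_cancel₀ _ hd0
    refine mul_right_cancel₀ hd0 ?_
    linear_combination -a * es - (1 - a) * et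
  have key : ∀ n : ℤ, ((b - n) ^ 2)⁻¹ < s * ((a - n) ^ 2)⁻¹ + t * ((1 - a - n) ^ 2)⁻¹ := by
    intro n
    rcases le_or_gt n 0 with h | h
    · have h' : (n : ℝ) ≤ 0 := by exact_mod_cast h
      have := sq_conv (u := a - n) (v := 1 - a - n) (by linarith) (by linarith)
        (by intro h; linarith) hs0 ht0 hst
      convert this using 3
      linear_combination hbe + n * hst
    · have h' : (1 : ℝ) ≤ n := by exact_mod_cast h
      have := sq_conv (u := n - a) (v := n - (1 - a)) (by linarith) (by linarith)
        (by intro h; linarith) hs0 ht0 hst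
      convert this using 2
      · rw [← neg_sq]
        congr 1
        linear_combination -hbe - n * hst
      · rw [← neg_sq, neg_sub]
      · rw [← neg_sq, neg_sub]
  have h1 := ((summable_SS a).mul_left s).add ((summable_SS (1 - a)).mul_left t)
  have h2 := (summable_SS b).tsum_lt_tsum (i := 0) (fun n => (key n).le) (key 0) h1
  rw [((summable_SS a).mul_left s).tsum_add ((summable_SS (1 - a)).mul_left t), tsum_mul_left,
    tsum_mul_left] at h2
  have h3 : SS b < s * SS a + t * SS (1 - a) := h2
  rw [SS_symm, ← add_mul, hst, one_mul] at h3
  exact h3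

lemma SS_inj_half {a b : ℝ} (h0 : 0 < a) (h1 : a ≤ 1 / 2) (h2 : 0 < b) (h3 : b ≤ 1 / 2)
    (h : SS a = SS b) : a = b := by
  rcases lt_trichotomy a b with h' | h' | h'
  · rcases eq_or_lt_of_le h3 with h4 | h4
    · have := SS_lt h0 h' (by linarith)
      linarith
    · have := SS_lt h0 h' (by linarith)
      linarith
  · exact h'
  · have := SS_lt h2 h' (by linarith)
    linarith

lemma SS_inj {a b : ℝ} (h0 : 0 < a) (h1 : a < 1) (h2 : 0 < b) (h3 : b < 1)
    (h : SS a = SS b) : a = b ∨ a + b = 1 := by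
  rcases le_total a (1 / 2) with ha | ha <;> rcases le_total b (1 / 2) with hb | hb
  · exact Or.inl (SS_inj_half h0 ha h2 hb h)
  · right
    have := SS_inj_half h0 ha (b := 1 - b) (by linarith) (by linarith) (by rw [SS_symm, h])
    linarith
  · right
    have := SS_inj_half (a := 1 - a) (by linarith) (by linarith) h2 hb (by rw [SS_symm, h])
    linarith
  · left
    have := SS_inj_half (a := 1 - a) (b := 1 - b) (by linarith) (by linarith) (by linarith)
      (by linarith) (by rw [SS_symm, SS_symm, h])
    linarith

/-- The points `(n+1) i`. -/
def tn (n : ℕ) : ℍ := ⟨⟨0, n + 1⟩, by positivity⟩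

lemma tn_re (n : ℕ) (a b : ℝ) : ((a : ℂ) * (tn n : ℂ) + b).re = b := by
  have h : (tn n : ℂ) = ⟨0, n + 1⟩ := rfl
  simp [h]

lemma tn_im (n : ℕ) (a b : ℝ) : ((a : ℂ) * (tn n : ℂ) + b).im = a * (n + 1) := by
  have h : (tn n : ℂ) = ⟨0, n + 1⟩ := rfl
  simp [h]

lemma tn_tendsto : Tendsto tn atTop atImInfty := by
  rw [atImInfty, tendsto_comap_iff]
  exact tendsto_atTop_add_const_right _ _ tendsto_natCast_atTop_atTop

lemma inv_tendsto (a b : ℝ) : Tendsto (fun n : ℕ => ((((a : ℂ) * (tn n : ℂ) + b)) ^ 2)⁻¹) atTop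
    (𝓝 (if a = 0 then ((b : ℂ) ^ 2)⁻¹ else 0)) := by
  split_ifs with h
  · simp [h]
  · simp only [← inv_pow]
    rw [show (0 : ℂ) = 0 ^ 2 by simp]
    apply Tendsto.pow
    apply tendsto_inv₀_cobounded.comp
    rw [← tendsto_norm_atTop_iff_cobounded]
    have : Tendsto (fun n : ℕ => |a| * ((n : ℝ) + 1)) atTop atTop :=
      (tendsto_atTop_add_const_right _ _ tendsto_natCast_atTop_atTop).const_mul_atTop (abs_pos.mpr h)
    refine tendsto_atTop_mono (fun n => ?_) this
    have h1 := Complex.abs_im_le_norm ((a : ℂ) * (tn n : ℂ) + b)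
    rw [tn_im, abs_mul, abs_of_nonneg (by positivity : (0 : ℝ) ≤ n + 1)] at h1
    exact h1

/-- Dominating factor. -/
def gg (k : ℤ) : ℝ := (√((max 1 |(k : ℝ)|) ^ 3))⁻¹

lemma gg_pos (k : ℤ) : 0 < gg k := by
  unfold gg
  positivity

lemma summable_gg : Summable gg := by
  have h := Real.summable_abs_int_rpow (b := 3 / 2) (by norm_num)
  refine h.of_norm_bounded_eventually ?_
  rw [Filter.eventually_cofinite]
  refine (Set.finite_singleton (0 : ℤ)).subset ?_
  intro k hk
  by_contra hk0
  apply hk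
  have hk1 : (1 : ℝ) ≤ |(k : ℝ)| := by exact_mod_cast Int.one_le_abs hk0
  rw [Real.norm_of_nonneg (gg_pos k).le, gg, max_eq_right hk1, Real.rpow_neg (by positivity)]
  rw [Real.sqrt_eq_rpow, ← Real.rpow_natCast, ← Real.rpow_mul (by positivity)]
  norm_num

lemma summable_gg2 : Summable (fun p : ℤ × ℤ => gg p.1 * gg p.2) :=
  summable_gg.mul_of_nonneg summable_gg (fun k => (gg_pos k).le) (fun k => (gg_pos k).le)

lemma sqrt_bd {a b M : ℝ} (ha : 0 < a) (hb : 0 < b) (haM : a ≤ M) (hbM : b ≤ M) :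
    √(a ^ 3) * √(b ^ 3) ≤ a * M ^ 2 := by
  have hM : 0 < M := ha.trans_le haM
  rw [← Real.sqrt_mul (by positivity)]
  rw [Real.sqrt_le_left (by positivity)]
  calc a ^ 3 * b ^ 3 = a ^ 2 * (a * b ^ 3) := by ring
    _ ≤ a ^ 2 * (M * M ^ 3) := by gcongr
    _ = (a * M ^ 2) ^ 2 := by ring

set_option maxHeartbeats 1000000 in
lemma dom_bd (x y : ℝ) (hx0 : 0 ≤ x) (hx1 : x < 1) (hy0 : 0 ≤ y) (hy1 : y < 1)
    (h0 : x ≠ 0 ∨ y ≠ 0) : ∃ C : ℝ, ∀ N : ℕ, ∀ p : ℤ × ℤ,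
    ‖(((x : ℂ) * (tn N : ℂ) + y - lat (tn N) p) ^ 2)⁻¹ - ((lat (tn N) p) ^ 2)⁻¹‖ ≤
      C * (gg p.1 * gg p.2) := by
  set δ : ℝ := min (1 - x) (1 - y) with hδ
  have hδ0 : 0 < δ := lt_min (by linarith) (by linarith)
  set ε : ℝ := max x y with hε
  have hε0 : 0 < ε := by
    rcases h0 with h | h
    · exact lt_max_of_lt_left (lt_of_le_of_ne hx0 h.symm)
    · exact lt_max_of_lt_right (lt_of_le_of_ne hy0 h.symm)
  refine ⟨4 / δ ^ 3 + ((δ ^ 2)⁻¹ + 1) + (ε ^ 2)⁻¹, ?_⟩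
  rintro N ⟨m, n⟩
  have hgp : 0 < gg m * gg n := mul_pos (gg_pos _) (gg_pos _)
  have hY : (1 : ℝ) ≤ (N : ℝ) + 1 := by linarith [(Nat.cast_nonneg N : (0 : ℝ) ≤ N)]
  set Y : ℝ := (N : ℝ) + 1 with hYd
  set w := lat (tn N) (m, n) with hw
  set z := (x : ℂ) * (tn N : ℂ) + y with hz
  have hw' : w = ((m : ℝ) : ℂ) * (tn N : ℂ) + ((n : ℝ) : ℂ) := by simp [hw, lat]
  have hzw' : z - w = ((x - m : ℝ) : ℂ) * (tn N : ℂ) + ((y - n : ℝ) : ℂ) := by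
    rw [hw', hz]; push_cast; ring
  have wre : w.re = n := by rw [hw', tn_re]
  have wim : w.im = m * Y := by rw [hw', tn_im]
  have zre : z.re = y := by rw [hz, tn_re]
  have zim : z.im = x * Y := by rw [hz, tn_im]
  have zwre : (z - w).re = y - n := by rw [hzw', tn_re]
  have zwim : (z - w).im = (x - m) * Y := by rw [hzw', tn_im]
  have d1 : δ * |(m : ℝ)| ≤ |x - m| := by
    refine le_trans ?_ (delta_bd hx0 hx1 m)
    gcongr
    exact min_le_left _ _
  have d2 : δ * |(n : ℝ)| ≤ |y - n| := by
    refine le_trans ?_ (delta_bd hy0 hy1 n)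
    gcongr
    exact min_le_right _ _
  rcases eq_or_ne m 0 with hm | hm
  · rcases eq_or_ne n 0 with hn | hn
    · have hw0 : w = 0 := by simp [hw', hm, hn]
      have hg : gg m * gg n = 1 := by simp [hm, hn, gg]
      rw [hw0, hg]
      have hzε : ε ≤ ‖z‖ := by
        have a1 := Complex.abs_re_le_norm z
        have a2 := Complex.abs_im_le_norm z
        rw [zre] at a1
        rw [zim] at a2
        refine max_le ?_ ((le_abs_self _).trans a1)
        refine le_trans ?_ ((le_abs_self _).trans a2)
        nlinarith
      have : ‖((z - 0) ^ 2)⁻¹ - ((0 : ℂ) ^ 2)⁻¹‖ ≤ (ε ^ 2)⁻¹ := by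
        simp only [sub_zero, ne_eq, OfNat.ofNat_ne_zero, not_false_eq_true, zero_pow, _root_.inv_zero,
          norm_inv, norm_pow]
        gcongr
      have q1 : 0 < 4 / δ ^ 3 := by positivity
      have q2 : 0 < (δ ^ 2)⁻¹ := by positivity
      linarith
    · have hn1 : (1 : ℝ) ≤ |(n : ℝ)| := by exact_mod_cast Int.one_le_abs hn
      have hg : (|(n : ℝ)| ^ 2)⁻¹ ≤ gg m * gg n := by
        simp only [gg, hm, Int.cast_zero, abs_zero, max_eq_right hn1]
        have := sqrt_bd (a := |(n : ℝ)|) (b := 1) (M := |(n : ℝ)|) (by linarith) one_pos le_rfl hn1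
        have h2 : √(|(n : ℝ)| ^ 3) ≤ |(n : ℝ)| ^ 2 := by
          rw [Real.sqrt_le_left (by positivity), ← pow_mul]
          exact pow_le_pow_right₀ hn1 (by norm_num)
        simp
        gcongr
        simpa using h2
      have a1 := Complex.abs_re_le_norm w
      have a2 := Complex.abs_re_le_norm (z - w)
      rw [wre] at a1
      rw [zwre] at a2
      have a3 := d2.trans a2
      have hnpos : 0 < |(n : ℝ)| := by linarith
      calc _ ≤ ‖((z - w) ^ 2)⁻¹‖ + ‖(w ^ 2)⁻¹‖ := norm_sub_le _ _
        _ = (‖z - w‖ ^ 2)⁻¹ + (‖w‖ ^ 2)⁻¹ := by simp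
        _ ≤ ((δ * |(n : ℝ)|) ^ 2)⁻¹ + (|(n : ℝ)| ^ 2)⁻¹ := by gcongr
        _ = ((δ ^ 2)⁻¹ + 1) * (|(n : ℝ)| ^ 2)⁻¹ := by
          rw [mul_pow, mul_inv]; ring
        _ ≤ ((δ ^ 2)⁻¹ + 1) * (gg m * gg n) := by gcongr
        _ ≤ _ := by
          refine mul_le_mul_of_nonneg_right ?_ hgp.le
          have q1 : 0 < 4 / δ ^ 3 := by positivity
          have q2 : 0 < (ε ^ 2)⁻¹ := by positivity
          linarith
  · have hm1 : (1 : ℝ) ≤ |(m : ℝ)| := by exact_mod_cast Int.one_le_abs hm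
    have hm0 : 0 < |(m : ℝ)| := by linarith
    set M := max |(m : ℝ)| |(n : ℝ)| with hM
    have hMm : |(m : ℝ)| ≤ M := le_max_left _ _
    have hM0 : 0 < M := hm0.trans_le hMm
    have hY0 : 0 < Y := by linarith
    have a1 := Complex.abs_re_le_norm w
    have a2 := Complex.abs_im_le_norm w
    rw [wre] at a1
    rw [wim, abs_mul, abs_of_pos hY0] at a2
    have a3 : M ≤ ‖w‖ := max_le (le_trans (by nlinarith) a2) a1
    have hw0 : 0 < ‖w‖ := hM0.trans_le a3
    have hzb : ‖z‖ ≤ 2 * Y := by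
      refine (Complex.norm_le_abs_re_add_abs_im z).trans ?_
      rw [zre, zim, abs_of_nonneg hy0, abs_of_nonneg (by positivity)]
      nlinarith
    have hb1 : δ * ‖w‖ ≤ ‖w‖ := by
      have : δ ≤ 1 := (min_le_left _ _).trans (by linarith)
      nlinarith
    have hb2 : δ * ‖w‖ ≤ ‖z - w‖ := by
      rw [← abs_of_nonneg (norm_nonneg (z - w)), ← abs_of_pos (mul_pos hδ0 hw0), ← sq_le_sq,
        mul_pow, Complex.sq_norm, Complex.sq_norm, Complex.normSq_apply, Complex.normSq_apply,
        wre, wim, zwre, zwim]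
      have e1 : (δ * |(m : ℝ)|) ^ 2 ≤ |x - m| ^ 2 := by gcongr
      have e2 : (δ * |(n : ℝ)|) ^ 2 ≤ |y - n| ^ 2 := by gcongr
      rw [mul_pow, sq_abs, sq_abs] at e1 e2
      nlinarith [mul_le_mul_of_nonneg_right e1 (sq_nonneg Y)]
    have hw3 : |(m : ℝ)| * Y * M ^ 2 ≤ ‖w‖ ^ 3 := by
      calc _ ≤ ‖w‖ * ‖w‖ ^ 2 := by gcongr
        _ = _ := by ring
    have hg : (|(m : ℝ)| * M ^ 2)⁻¹ ≤ gg m * gg n := by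
      simp only [gg, max_eq_right hm1]
      rw [← mul_inv]
      refine inv_anti₀ (by positivity) ?_
      exact sqrt_bd hm0 (by positivity) hMm (max_le (hm1.trans hMm) (le_max_right _ _))
    calc _ ≤ 2 * ‖z‖ / (δ * ‖w‖) ^ 3 := term_bd (by positivity) hb1 hb2
      _ = 2 * ‖z‖ / (δ ^ 3 * ‖w‖ ^ 3) := by rw [mul_pow]
      _ ≤ 2 * (2 * Y) / (δ ^ 3 * (|(m : ℝ)| * Y * M ^ 2)) := by gcongr
      _ = 4 / δ ^ 3 * (|(m : ℝ)| * M ^ 2)⁻¹ := by field_simp; norm_num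
      _ ≤ 4 / δ ^ 3 * (gg m * gg n) := by gcongr
      _ ≤ _ := by
        refine mul_le_mul_of_nonneg_right ?_ hgp.le
        have q1 : 0 < (δ ^ 2)⁻¹ := by positivity
        have q2 : 0 < (ε ^ 2)⁻¹ := by positivity
        linarith

lemma wr_tendsto (t : ℚ × ℚ) (h1 : 0 ≤ t.1) (h1' : t.1 < 1) (h2 : 0 ≤ t.2) (h2' : t.2 < 1)
    (ht : t ≠ 0) : Tendsto (fun n => wr t (tn n)) atTop
      (𝓝 ((((if t.1 = 0 then SS t.2 else 0) - SS 0 : ℝ)) : ℂ)) := by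
  have hx0 : (0 : ℝ) ≤ t.1 := by exact_mod_cast h1
  have hx1 : (t.1 : ℝ) < 1 := by exact_mod_cast h1'
  have hy0 : (0 : ℝ) ≤ t.2 := by exact_mod_cast h2
  have hy1 : (t.2 : ℝ) < 1 := by exact_mod_cast h2'
  have hne : (t.1 : ℝ) ≠ 0 ∨ (t.2 : ℝ) ≠ 0 := by
    by_contra hcon
    push Not at hcon
    apply ht
    ext
    · simpa using hcon.1
    · simpa using hcon.2
  obtain ⟨C, hC⟩ := dom_bd t.1 t.2 hx0 hx1 hy0 hy1 hne
  let L : ℤ × ℤ → ℂ := fun p =>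
    (if (t.1 : ℝ) - p.1 = 0 then ((((t.2 : ℝ) - p.2 : ℝ) : ℂ) ^ 2)⁻¹ else 0) -
      (if (p.1 : ℝ) = 0 then ((((p.2 : ℝ)) : ℂ) ^ 2)⁻¹ else 0)
  have hlim : Tendsto (fun n => wr t (tn n)) atTop (𝓝 (∑' p, L p)) := by
    simp only [wr, wpC_eq_tsum]
    refine tendsto_tsum_of_dominated_convergence (summable_gg2.mul_left C) ?_ ?_
    · intro p
      refine Tendsto.sub ?_ ?_
      · refine (inv_tendsto ((t.1 : ℝ) - p.1) ((t.2 : ℝ) - p.2)).congr (fun n => ?_)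
        congr 2
        simp only [lat]
        push_cast
        ring
      · refine (inv_tendsto (p.1 : ℝ) (p.2 : ℝ)).congr (fun n => ?_)
        simp [lat]
    · refine Eventually.of_forall (fun n p => ?_)
      exact_mod_cast hC n p
  convert hlim using 2
  have hinj : Function.Injective (fun n : ℤ => ((0 : ℤ), n)) := by
    intro a b hab
    simpa using hab
  rw [← hinj.tsum_eq (f := L)]
  · have hL : ∀ n : ℤ, L (0, n) =
        ((((if t.1 = 0 then (((t.2 : ℝ) - n) ^ 2)⁻¹ else 0) - (((0 : ℝ) - n) ^ 2)⁻¹ : ℝ)) : ℂ) := by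
      intro n
      simp only [L]
      by_cases h : t.1 = 0 <;> simp [h]
    simp only [hL]
    rw [← Complex.ofReal_tsum]
    congr 1
    by_cases h : t.1 = 0
    · simp only [h, if_true]
      exact ((summable_SS _).tsum_sub (summable_SS 0)).symm
    · simp only [h, if_false, zero_sub, tsum_neg]
      simp [SS]
  · rintro ⟨m, n⟩ hp
    by_cases hm : m = 0
    · exact ⟨n, by simp [hm]⟩
    · exfalso
      apply hp
      have q1 : (m : ℝ) ≠ 0 := by exact_mod_cast hm
      have q2 : (t.1 : ℝ) - m ≠ 0 := by
        intro h0
        have h3 : (t.1 : ℝ) = m := by linarith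
        rw [h3] at hx0 hx1
        have : 0 ≤ m := by exact_mod_cast hx0
        have : m < 1 := by exact_mod_cast hx1
        lia
      simp only [L, q1, q2, if_false, sub_zero]

lemma ev_ne : ∀ᶠ n in atTop, g2C (tn n) ≠ 0 ∧ g3C (tn n) ≠ 0 := by
  have h4 := ((tendsto_E 4 (by norm_num) ⟨2, rfl⟩).comp tn_tendsto).eventually_ne one_ne_zero
  have h6 := ((tendsto_E 6 (by norm_num) ⟨3, rfl⟩).comp tn_tendsto).eventually_ne one_ne_zero
  filter_upwards [h4, h6] with n h4 h6
  have hpi : (π : ℂ) ≠ 0 := by exact_mod_cast Real.pi_ne_zero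
  rw [g2C_eq, g3C_eq]
  exact ⟨mul_ne_zero (mul_ne_zero (by norm_num) (pow_ne_zero _ hpi)) h4,
    mul_ne_zero (mul_ne_zero (by norm_num) (pow_ne_zero _ hpi)) h6⟩

lemma forward (r s : ℚ × ℚ) (hr : NonIntegral r) (hs : NonIntegral s)
    (h : ∀ τ : ℍ, fricke r τ = fricke s τ) :
      ((∃ a b : ℤ, r - s = ((a : ℚ), (b : ℚ))) ∨
       (∃ a b : ℤ, r + s = ((a : ℚ), (b : ℚ)))) := by
  obtain ⟨γ, hγ⟩ := exists_gamma r hr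
  have hR : NonIntegral (tAct γ r) := fun hh => hr (tAct_int γ r hh)
  have hS : NonIntegral (tAct γ s) := fun hh => hs (tAct_int γ s hh)
  suffices hsuff : ((∃ a b : ℤ, tAct γ r - tAct γ s = ((a : ℚ), (b : ℚ))) ∨
       (∃ a b : ℤ, tAct γ r + tAct γ s = ((a : ℚ), (b : ℚ)))) by
    rw [← tAct_sub, ← tAct_add] at hsuff
    exact hsuff.imp (tAct_int γ _) (tAct_int γ _)
  have hwr := wr_eq_of γ r s h
  generalize tAct γ r = R at *
  generalize tAct γ s = Q at *
  obtain ⟨t, ⟨a1, b1, ht⟩, ht1, ht2, ht3, ht4, ht5⟩ := exists_reduce R hR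
  obtain ⟨u, ⟨a2, b2, hu⟩, hu1, hu2, hu3, hu4, hu5⟩ := exists_reduce Q hS
  have ht0 : t.1 = 0 := by
    have e := congrArg Prod.fst ht
    simp only [Prod.fst_sub, hγ, zero_sub] at e
    have e2 : t.1 = ((-a1 : ℤ) : ℚ) := by push_cast; linarith
    rw [e2] at ht1 ht2 ⊢
    have : 0 ≤ -a1 := by exact_mod_cast ht1
    have : -a1 < 1 := by exact_mod_cast ht2
    have : -a1 = 0 := by lia
    simp [this]
  have l1 := wr_tendsto t ht1 ht2 ht3 ht4 ht5
  have l2 := wr_tendsto u hu1 hu2 hu3 hu4 hu5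
  have heq : ∀ᶠ n in atTop, wr t (tn n) = wr u (tn n) := by
    filter_upwards [ev_ne] with n hn
    rw [← wr_congr (Or.inl ⟨a1, b1, ht⟩), ← wr_congr (Or.inl ⟨a2, b2, hu⟩)]
    exact hwr _ hn.1 hn.2
  have hl := tendsto_nhds_unique (l1.congr' heq) l2
  have hl : SS t.2 = if u.1 = 0 then SS u.2 else 0 := by
    have := Complex.ofReal_injective hl
    simp only [ht0, if_true] at this
    linarith
  have htp : 0 < t.2 := lt_of_le_of_ne ht3 (fun h0 => ht5 (Prod.ext ht0 h0.symm))
  have htp' : (0 : ℝ) < t.2 := by exact_mod_cast htp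
  have hpos := SS_pos htp'
  have hu0 : u.1 = 0 := by
    by_contra hc
    rw [if_neg hc] at hl
    linarith
  rw [if_pos hu0] at hl
  have hup : 0 < u.2 := lt_of_le_of_ne hu3 (fun h0 => hu5 (Prod.ext hu0 h0.symm))
  have hinj := SS_inj htp' (by exact_mod_cast ht4) (by exact_mod_cast hup) (by exact_mod_cast hu4) hl
  have f1 := congrArg Prod.fst ht
  have f2 := congrArg Prod.snd ht
  have f3 := congrArg Prod.fst hu
  have f4 := congrArg Prod.snd hu
  simp only [Prod.fst_sub, Prod.snd_sub] at f1 f2 f3 f4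
  rcases hinj with hi | hi
  · have hi : t.2 = u.2 := by exact_mod_cast hi
    left
    refine ⟨a1 - a2, b1 - b2, ?_⟩
    ext
    · simp only [Prod.fst_sub]; push_cast; linarith
    · simp only [Prod.snd_sub]; push_cast; linarith
  · have hi : t.2 + u.2 = 1 := by exact_mod_cast hi
    right
    refine ⟨a1 + a2, b1 + b2 + 1, ?_⟩
    ext
    · simp only [Prod.fst_add]; push_cast; linarith
    · simp only [Prod.snd_add]; push_cast; linarith

end Fricke4

/-- each Fricke function is holomorphic on `ℍ`, and
`f_r = f_s` iff `r ≡ s` or `r ≡ -s (mod ℤ²)`. -/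
theorem statement4 (r s : ℚ × ℚ) (hr : NonIntegral r) (hs : NonIntegral s) :
    MDifferentiable 𝓘(ℂ) 𝓘(ℂ) (fricke r) ∧
    ((∀ τ : ℍ, fricke r τ = fricke s τ) ↔
      ((∃ a b : ℤ, r - s = ((a : ℚ), (b : ℚ))) ∨
       (∃ a b : ℤ, r + s = ((a : ℚ), (b : ℚ))))) := by
  exact ⟨mdiff_of r (wr_mdiff r hr), ⟨forward r s hr hs, fun h τ => by
    rw [fricke_eq, fricke_eq, wr_congr h]⟩⟩
end
end

section
/- Let N > 1 be an integer and let {m(r)} be a family of integers indexed by r ∈ (1/N)ℤ²∖ℤ² with m(r) = 0 for all but finitely many r. If ∑_r m(r) ≡ 0 (mod 12), then for every γ ∈ SL₂(ℤ) and all τ ∈ ℍ, ∏_r g_r(γτ)^{m(r)} = ∏_r g_{ᵗγ r}(τ)^{m(r)}, where for γ = [[a,b],[c,d]] one sets ᵗγ r = (a r₁ + c r₂, b r₁ + d r₂). -/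
open Complex UpperHalfPlane Matrix MatrixGroups CongruenceSubgroup
open scoped UpperHalfPlane Manifold Real

noncomputable section

/-- q-Pochhammer product. -/
def qP (q w : ℂ) : ℂ := ∏' n : ℕ, (1 - q ^ n * w)

theorem qP_summable {q : ℂ} (hq : ‖q‖ < 1) (w : ℂ) : Summable (fun n : ℕ => ‖-(q ^ n * w)‖) := by
  simpa using (summable_geometric_of_lt_one (norm_nonneg q) hq).mul_right ‖w‖

theorem qP_multipliable {q : ℂ} (hq : ‖q‖ < 1) (w : ℂ) :
    Multipliable (fun n : ℕ => (1 - q ^ n * w)) := by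
  simpa [sub_eq_add_neg] using multipliable_one_add_of_summable (qP_summable hq w)

theorem qP_rec {q : ℂ} (hq : ‖q‖ < 1) (w : ℂ) : qP q w = (1 - w) * qP q (q * w) := by
  have h : ∀ n : ℕ, 1 - q ^ n * (q * w) = 1 - q ^ (n + 1) * w := fun n => by ring
  have h1 : Multipliable (fun n : ℕ => 1 - q ^ (n + 1) * w) :=
    (qP_multipliable hq (q * w)).congr h
  have h2 : qP q (q * w) = ∏' n : ℕ, (1 - q ^ (n + 1) * w) := tprod_congr h
  rw [h2]
  have h3 := tprod_eq_zero_mul' (f := fun n : ℕ => 1 - q ^ n * w) h1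
  simp only [pow_zero, one_mul] at h3
  exact h3

theorem qP_differentiable {q : ℂ} (hq : ‖q‖ < 1) : Differentiable ℂ (qP q) := by
  have key : HasProdLocallyUniformlyOn (fun (n : ℕ) (w : ℂ) => 1 + -(q ^ n * w))
      (fun w => ∏' n : ℕ, (1 + -(q ^ n * w))) Set.univ := by
    apply hasProdLocallyUniformlyOn_of_forall_compact isOpen_univ
    intro K _ hK
    obtain ⟨M, hM⟩ := hK.isBounded.exists_norm_le
    refine ((summable_geometric_of_lt_one (norm_nonneg q) hq).mul_right M).hasProdUniformlyOn_nat_one_add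
      hK (.of_forall fun n x hx ↦ ?_) (fun _ ↦ by fun_prop)
    rw [norm_neg, norm_mul, norm_pow]
    exact mul_le_mul_of_nonneg_left (hM x hx) (by positivity)
  have := key.differentiableOn
    (.of_forall fun _ ↦ by simpa [Finset.prod_fn] using
      DifferentiableOn.finsetProd (fun _ _ ↦ by fun_prop)) isOpen_univ
  have h2 : qP q = (fun w => ∏' n : ℕ, (1 + -(q ^ n * w))) := by
    funext w; simp [qP, sub_eq_add_neg]
  rw [h2]
  exact differentiableOn_univ.1 this

theorem qP_eq_zero {q : ℂ} (hq : ‖q‖ < 1) {w : ℂ} (h : qP q w = 0) : ∃ n : ℕ, q ^ n * w = 1 := by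
  by_contra! hne
  refine tprod_one_add_ne_zero_of_summable (f := fun n : ℕ => -(q ^ n * w)) ?_ (qP_summable hq w) ?_
  · intro n hn
    exact hne n (by linear_combination -hn)
  · simpa [qP, sub_eq_add_neg] using h

/-- `e(z) = exp(2πiz)`. -/
def ee (z : ℂ) : ℂ := Complex.exp (2 * (Real.pi : ℂ) * Complex.I * z)

theorem ee_add (x y : ℂ) : ee (x + y) = ee x * ee y := by
  unfold ee; rw [← Complex.exp_add]; ring_nf

theorem ee_nat (n : ℕ) (x : ℂ) : ee (n * x) = ee x ^ n := by
  unfold ee; rw [← Complex.exp_nat_mul]; ring_nf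

theorem ee_ne (x : ℂ) : ee x ≠ 0 := Complex.exp_ne_zero _

theorem ee_neg (x : ℂ) : ee (-x) = (ee x)⁻¹ := by
  unfold ee; rw [← Complex.exp_neg]; ring_nf

theorem ee_one : ee 1 = 1 := by
  unfold ee; simp [Complex.exp_two_pi_mul_I]

theorem ee_zero : ee 0 = 1 := by
  unfold ee; simp

theorem ee_eq_one {x : ℂ} (h : ee x = 1) : ∃ n : ℤ, x = n := by
  unfold ee at h
  rw [Complex.exp_eq_one_iff] at h
  obtain ⟨n, hn⟩ := h
  refine ⟨n, ?_⟩
  have : (2 * (Real.pi : ℂ) * Complex.I) ≠ 0 := Complex.two_pi_I_ne_zero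
  apply mul_left_cancel₀ this
  rw [hn]; ring

theorem ee_norm {τ : ℂ} (hτ : 0 < τ.im) : ‖ee τ‖ < 1 :=
  UpperHalfPlane.norm_exp_two_pi_I_lt_one ⟨τ, hτ⟩

theorem ee_differentiable : Differentiable ℂ ee := by
  unfold ee; fun_prop

theorem exp_pi_eq {x : ℂ} (y : ℂ) (h : x = 2 * (Real.pi : ℂ) * Complex.I * y) :
    Complex.exp x = ee y := by rw [h]; rfl

/-- Klein-form like product. -/
def KK (τ z : ℂ) : ℂ := ee (τ / 12 - z / 2) * qP (ee τ) (ee z) * qP (ee τ) (ee (τ - z))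

theorem ee_half : ee (1 / 2) = -1 := by
  unfold ee
  rw [show 2 * (Real.pi : ℂ) * Complex.I * (1 / 2) = Real.pi * Complex.I by ring, Complex.exp_pi_mul_I]

theorem KK_add_one (τ z : ℂ) : KK τ (z + 1) = - KK τ z := by
  unfold KK
  rw [ee_add z 1, ee_one, show τ - (z + 1) = τ - z + -1 by ring, ee_add (τ - z), ee_neg, ee_one,
    show τ / 12 - (z + 1) / 2 = τ / 12 - z / 2 + -(1/2) by ring, ee_add _ (-(1/2)), ee_neg, ee_half]
  norm_num

theorem KK_add_tau {τ : ℂ} (hτ : 0 < τ.im) (z : ℂ) :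
    KK τ (z + τ) = - ee (-z - τ / 2) * KK τ z := by
  unfold KK
  have h1 : qP (ee τ) (ee (τ - (z + τ))) = (1 - ee (-z)) * qP (ee τ) (ee (τ - z)) := by
    rw [qP_rec (ee_norm hτ), ← ee_add]
    ring_nf
  have h2 : qP (ee τ) (ee z) = (1 - ee z) * qP (ee τ) (ee (z + τ)) := by
    rw [qP_rec (ee_norm hτ), ← ee_add, add_comm τ]
  have h3 : 1 - ee (-z) = - ee (-z) * (1 - ee z) := by
    rw [ee_neg]; have := ee_ne z; field_simp; ring
  have h4 : ee (τ / 12 - (z + τ) / 2) * ee (-z) = ee (-z - τ / 2) * ee (τ / 12 - z / 2) := by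
    rw [← ee_add, ← ee_add]; ring_nf
  rw [h1, h2, h3]
  linear_combination (-(1 - ee z) * qP (ee τ) (ee (z + τ)) * qP (ee τ) (ee (τ - z))) * h4

theorem KK_sub_tau {τ : ℂ} (hτ : 0 < τ.im) (z : ℂ) :
    KK τ (z - τ) = - ee (z - τ / 2) * KK τ z := by
  have h := KK_add_tau hτ (z - τ)
  rw [sub_add_cancel] at h
  rw [h]
  have : ee (z - τ / 2) * ee (-(z - τ) - τ / 2) = 1 := by
    rw [← ee_add, ← ee_zero]; ring_nf
  linear_combination (-KK τ (z - τ)) * this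

theorem KK_differentiable {τ : ℂ} (hτ : 0 < τ.im) : Differentiable ℂ (KK τ) := by
  have h1 := qP_differentiable (ee_norm hτ)
  have h2 := ee_differentiable
  unfold KK
  fun_prop

theorem KK_zero_lattice {τ : ℂ} (hτ : 0 < τ.im) {z : ℂ} (h : KK τ z = 0) :
    ∃ a b : ℤ, z = a * τ + b := by
  unfold KK at h
  simp only [mul_eq_zero, ee_ne, false_or] at h
  rcases h with h | h
  · obtain ⟨n, hn⟩ := qP_eq_zero (ee_norm hτ) h
    rw [← ee_nat, ← ee_add] at hn
    obtain ⟨k, hk⟩ := ee_eq_one hn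
    exact ⟨-n, k, by push_cast; linear_combination hk⟩
  · obtain ⟨n, hn⟩ := qP_eq_zero (ee_norm hτ) h
    rw [← ee_nat, ← ee_add] at hn
    obtain ⟨k, hk⟩ := ee_eq_one hn
    exact ⟨n + 1, -k, by push_cast; linear_combination -hk⟩

theorem KK_zero {τ : ℂ} (hτ : 0 < τ.im) : KK τ 0 = 0 := by
  unfold KK
  rw [qP_rec (ee_norm hτ) (ee 0), ee_zero]; simp

theorem KK_deriv_zero {τ : ℂ} (hτ : 0 < τ.im) :
    HasDerivAt (KK τ) (-(2 * Real.pi * Complex.I) * ModularForm.eta τ ^ 2) 0 := by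
  have h1 := qP_differentiable (ee_norm hτ)
  have h2 := ee_differentiable
  have hd : DifferentiableAt ℂ
      (fun z => ee (τ / 12 - z / 2) * qP (ee τ) (ee (τ + z)) * qP (ee τ) (ee (τ - z))) 0 := by
    fun_prop
  have h3 : HasDerivAt (fun z => 1 - ee z) (-(2 * Real.pi * Complex.I)) 0 := by
    have : HasDerivAt ee (2 * Real.pi * Complex.I) 0 := by
      unfold ee
      have := ((hasDerivAt_id (0:ℂ)).const_mul (2 * Real.pi * Complex.I)).cexp
      simpa using this
    exact this.const_sub 1
  have h4 := h3.mul hd.hasDerivAt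
  have heta : ModularForm.eta τ ^ 2 = ee (τ / 12) * qP (ee τ) (ee τ) * qP (ee τ) (ee τ) := by
    unfold ModularForm.eta
    have : ∏' n, (1 - ModularForm.eta_q n τ) = qP (ee τ) (ee τ) := by
      unfold qP
      congr 1; funext n
      rw [ModularForm.eta_q_eq_pow, pow_succ]; rfl
    rw [this]
    have : Function.Periodic.qParam 24 τ ^ 2 = ee (τ / 12) := by
      unfold Function.Periodic.qParam ee
      rw [← Complex.exp_nat_mul]; push_cast; ring_nf
    rw [← this]; ring
  have e1 : KK τ = (fun z => 1 - ee z) *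
      fun z => ee (τ / 12 - z / 2) * qP (ee τ) (ee (τ + z)) * qP (ee τ) (ee (τ - z)) := by
    funext z
    simp only [KK, Pi.mul_apply]
    rw [qP_rec (ee_norm hτ) (ee z), ← ee_add]; ring
  rw [e1, heta]
  refine h4.congr_deriv ?_
  simp [ee_zero]

theorem liouville_lattice {τ : ℂ} (hτ : 0 < τ.im) (A B m : ℂ → ℂ) (a b : ℂ)
    (hA : Differentiable ℂ A) (hB : Differentiable ℂ B)
    (hA1 : ∀ z, A (z + 1) = - A z) (hB1 : ∀ z, B (z + 1) = - B z)
    (hm : ∀ z, m z ≠ 0)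
    (hAt : ∀ z, A (z + τ) = m z * A z) (hBt : ∀ z, B (z + τ) = m z * B z)
    (hB0 : ∀ z, B z = 0 → ∃ k l : ℤ, z = k * τ + l)
    (hA00 : A 0 = 0) (hB00 : B 0 = 0)
    (ha : HasDerivAt A a 0) (hb : HasDerivAt B b 0) (hbne : b ≠ 0) :
    ∀ z, A z = a / b * B z := by
  classical
  set h : ℂ → ℂ := fun z => if B z = 0 then a / b else A z / B z with hh
  have p1 : ∀ z, h (z + 1) = h z := by
    intro z; simp only [hh, hA1, hB1, neg_eq_zero, neg_div_neg_eq]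
  have pt : ∀ z, h (z + τ) = h z := by
    intro z; simp only [hh, hAt, hBt, mul_eq_zero, hm, false_or, mul_div_mul_left _ _ (hm z)]
  have q1 : ∀ (k : ℤ) z, h (z + k) = h z := by
    intro k z
    have : Function.Periodic h 1 := p1
    simpa using this.int_mul k z
  have qt : ∀ (k : ℤ) z, h (z + k * τ) = h z := by
    intro k z
    have : Function.Periodic h τ := pt
    exact this.int_mul k z
  have d0 : DifferentiableAt ℂ h 0 := by
    have dA : Differentiable ℂ (dslope A 0) := differentiableOn_univ.1
      ((Complex.differentiableOn_dslope Filter.univ_mem).2 hA.differentiableOn)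
    have dB : Differentiable ℂ (dslope B 0) := differentiableOn_univ.1
      ((Complex.differentiableOn_dslope Filter.univ_mem).2 hB.differentiableOn)
    have hB' : dslope B 0 0 = b := by rw [dslope_same, hb.deriv]
    have hA' : dslope A 0 0 = a := by rw [dslope_same, ha.deriv]
    have hne : dslope B 0 0 ≠ 0 := by rw [hB']; exact hbne
    have := (dA 0).div (dB 0) hne
    refine this.congr_of_eventuallyEq ?_
    filter_upwards [(dB 0).continuousAt.eventually_ne hne] with z hz
    by_cases hz0 : z = 0
    · subst hz0
      rw [Pi.div_apply, hA', hB']; simp [hh, hB00]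
    · have e1 : dslope B 0 z = B z / z := by
        rw [dslope_of_ne _ hz0, slope_def_field]; simp [hB00]
      have e2 : dslope A 0 z = A z / z := by
        rw [dslope_of_ne _ hz0, slope_def_field]; simp [hA00]
      have hBz : B z ≠ 0 := by
        intro h0; apply hz; rw [e1, h0]; simp
      simp only [hh, hBz, if_false, Pi.div_apply, e1, e2]
      field_simp
  have hd : Differentiable ℂ h := by
    intro z
    by_cases hz : B z = 0
    · obtain ⟨k, l, hkl⟩ := hB0 z hz
      have e : h = fun w => h (w - z) := by
        funext w
        have e := q1 l (w - z + k * τ)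
        rw [qt] at e
        rw [← e, hkl]; congr 1; ring
      rw [e]
      have : DifferentiableAt ℂ h (z - z) := by rw [sub_self]; exact d0
      exact DifferentiableAt.comp z (f := fun w => w - z) this (by fun_prop)
    · refine ((hA z).div (hB z) hz).congr_of_eventuallyEq ?_
      filter_upwards [(hB z).continuousAt.eventually_ne hz] with w hw
      simp [hh, hw]
  have hbd : Bornology.IsBounded (Set.range h) := by
    have hc : IsCompact ((fun p : ℝ × ℝ => h (p.1 * τ + p.2)) '' (Set.Icc 0 1 ×ˢ Set.Icc 0 1)) := by
      refine (isCompact_Icc.prod isCompact_Icc).image ?_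
      have := hd.continuous
      fun_prop
    refine hc.isBounded.subset ?_
    rintro _ ⟨z, rfl⟩
    set s : ℝ := z.im / τ.im
    set t : ℝ := (z - s * τ).re
    have hz : z = s * τ + t := by
      apply Complex.ext
      · simp [t]
      · simp [s, hτ.ne']
    refine ⟨(Int.fract s, Int.fract t), ⟨⟨Int.fract_nonneg _, (Int.fract_lt_one _).le⟩,
      ⟨Int.fract_nonneg _, (Int.fract_lt_one _).le⟩⟩, ?_⟩
    have : z = (((Int.fract s : ℝ) : ℂ) * τ + ((Int.fract t : ℝ) : ℂ)) + (⌊s⌋ : ℤ) * τ + (⌊t⌋ : ℤ) := by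
      rw [hz]; simp only [Int.fract]; push_cast; ring
    conv_rhs => rw [this, q1, qt]
  intro z
  have hconst := hd.apply_eq_apply_of_bounded hbd z 0
  have h0 : h 0 = a / b := by simp [hh, hB00]
  rw [h0] at hconst
  by_cases hz : B z = 0
  · obtain ⟨k, l, hkl⟩ := hB0 z hz
    have P1 : Function.Periodic (fun z => A z = 0) 1 := fun z => by simp [hA1]
    have Pt : Function.Periodic (fun z => A z = 0) τ := fun z => by simp [hAt, hm]
    have e1 := P1.int_mul l (k * τ)
    have e2 := Pt.int_mul k 0
    simp only [mul_one, zero_add] at e1 e2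
    rw [hz, mul_zero, hkl, e1, e2]
    exact hA00
  · simp only [hh, hz, if_false] at hconst
    rw [← hconst]; field_simp

theorem KK_S {τ : ℂ} (hτ : 0 < τ.im) : ∃ ε : ℂ, ε ^ 12 = 1 ∧
    ∀ z, KK (-1 / τ) (z / τ) = ε * ee (z ^ 2 / (2 * τ)) * KK τ z := by
  have hne : τ ≠ 0 := by rintro rfl; simp at hτ
  have hτ' : 0 < (-1 / τ).im := by
    have := UpperHalfPlane.im_inv_neg_coe_pos ⟨τ, hτ⟩
    rw [show -1 / τ = (-τ)⁻¹ by rw [neg_div, one_div, inv_neg]]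
    exact this
  have hη := ModularForm.eta_ne_zero hτ
  have hη' := ModularForm.eta_ne_zero hτ'
  have hSq : ModularForm.eta (-1 / τ) ^ 24 = τ ^ 12 * ModularForm.eta τ ^ 24 := by
    have h := congrFun ModularForm.discriminant_S_invariant ⟨τ, hτ⟩
    rw [ModularForm.SL_slash_apply, UpperHalfPlane.modular_S_smul, ModularGroup.denom_S] at h
    simp only [ModularForm.discriminant] at h
    have e : ((-1 / τ : ℂ)) = (-τ)⁻¹ := by rw [neg_div, one_div, inv_neg]
    rw [e]
    change ModularForm.eta (-τ)⁻¹ ^ 24 * τ ^ (-12 : ℤ) = ModularForm.eta τ ^ 24 at h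
    rw [← h, _root_.zpow_neg]
    have : τ ^ (12 : ℤ) = τ ^ 12 := by norm_cast
    rw [this]
    field_simp
  have hpi : (2 * (Real.pi : ℂ) * Complex.I) ≠ 0 := Complex.two_pi_I_ne_zero
  set a : ℂ := -(2 * Real.pi * Complex.I) * ModularForm.eta (-1 / τ) ^ 2 / τ with ha
  set b : ℂ := -(2 * Real.pi * Complex.I) * ModularForm.eta τ ^ 2 with hb
  have key := liouville_lattice hτ (fun z => ee (-(z ^ 2 / (2 * τ))) * KK (-1 / τ) (z / τ)) (KK τ)
    (fun z => - ee (-z - τ / 2)) a b ?_ (KK_differentiable hτ) ?_ (KK_add_one τ) ?_ ?_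
    (KK_add_tau hτ) (fun z hz => KK_zero_lattice hτ hz) ?_ (KK_zero hτ) ?_ (KK_deriv_zero hτ) ?_
  · refine ⟨a / b, ?_, ?_⟩
    · have : a / b = ModularForm.eta (-1 / τ) ^ 2 / (τ * ModularForm.eta τ ^ 2) := by
        rw [ha, hb]; field_simp
      rw [this, div_pow, mul_pow, ← pow_mul, ← pow_mul, hSq]
      field_simp
    · intro z
      have h := key z
      simp only [ee_neg] at h
      have := ee_ne (z ^ 2 / (2 * τ))
      field_simp at h ⊢
      linear_combination h
  · have h1 := KK_differentiable hτ'
    have h2 := ee_differentiable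
    fun_prop
  · intro z
    rw [show (z + 1) / τ = z / τ - (-1 / τ) by ring, KK_sub_tau hτ']
    have : ee (-((z + 1) ^ 2 / (2 * τ))) * ee (z / τ - -1 / τ / 2) = ee (-(z ^ 2 / (2 * τ))) := by
      rw [← ee_add]; congr 1; field_simp; ring
    rw [← this]; ring
  · intro z
    exact neg_ne_zero.2 (ee_ne _)
  · intro z
    rw [show (z + τ) / τ = z / τ + 1 by field_simp, KK_add_one]
    have : ee (-((z + τ) ^ 2 / (2 * τ))) = ee (-z - τ / 2) * ee (-(z ^ 2 / (2 * τ))) := by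
      rw [← ee_add]; congr 1; field_simp; ring
    rw [this]; ring
  · simp [KK_zero hτ']
  · have h2 := ee_differentiable
    have d1 : DifferentiableAt ℂ (fun z => ee (-(z ^ 2 / (2 * τ)))) 0 := by fun_prop
    have d2 : HasDerivAt (fun z => KK (-1 / τ) (z / τ)) a 0 := by
      have h3 : HasDerivAt (fun z : ℂ => z / τ) (1 / τ) 0 := (hasDerivAt_id (0:ℂ)).div_const τ
      have h4 : HasDerivAt (KK (-1 / τ))
        (-(2 * Real.pi * Complex.I) * ModularForm.eta (-1 / τ) ^ 2) ((0:ℂ) / τ) := by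
        rw [zero_div]; exact KK_deriv_zero hτ'
      refine (h4.comp (0:ℂ) h3).congr_deriv ?_
      rw [ha]; ring
    refine (d1.hasDerivAt.mul d2).congr_deriv ?_
    simp [KK_zero hτ', ee_zero]
  · rw [hb]; exact mul_ne_zero (neg_ne_zero.2 hpi) (pow_ne_zero _ hη)

theorem siegel_eq (r : ℚ × ℚ) (τ : ℍ) :
    siegel r τ = - ee ((r.1 : ℂ) * ((r.1 : ℂ) * τ + r.2) / 2) * KK τ ((r.1 : ℂ) * τ + r.2) := by
  have hτ : 0 < (τ : ℂ).im := τ.2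
  set x : ℂ := (r.1 : ℂ) with hx
  set y : ℂ := (r.2 : ℂ) with hy
  set t : ℂ := (τ : ℂ) with ht
  have hprod : (∏' n : ℕ,
      ((1 - Complex.exp (2 * (Real.pi : ℂ) * Complex.I * (((n : ℂ) + 1 + x) * t + y))) *
       (1 - Complex.exp (2 * (Real.pi : ℂ) * Complex.I * (((n : ℂ) + 1 - x) * t - y))))) =
      qP (ee t) (ee t * ee (x * t + y)) * qP (ee t) (ee (t - (x * t + y))) := by
    unfold qP
    rw [← (qP_multipliable (ee_norm hτ) _).tprod_mul (qP_multipliable (ee_norm hτ) _)]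
    refine tprod_congr fun n => ?_
    rw [← ee_nat, ← ee_add, ← ee_add, ← ee_add]
    unfold ee
    congr 3
    · congr 1; ring
    · congr 1; ring
  unfold siegel
  rw [hprod]
  unfold KK
  rw [qP_rec (ee_norm hτ) (ee (x * t + y))]
  rw [exp_pi_eq ((x ^ 2 - x + 1 / 6) * t / 2) (by ring), exp_pi_eq (y * (x - 1) / 2) (by ring)]
  change -ee _ * ee _ * (1 - ee (x * t + y)) * _ = _
  have : ee ((x ^ 2 - x + 1 / 6) * t / 2) * ee (y * (x - 1) / 2) =
    ee (x * (x * t + y) / 2) * ee (t / 12 - (x * t + y) / 2) := by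
    rw [← ee_add, ← ee_add]; congr 1; ring
  linear_combination (-(1 - ee (x * t + y)) * qP (ee t) (ee t * ee (x * t + y)) * qP (ee t) (ee (t - (x * t + y)))) * this

/-- Transformation property of Siegel functions up to a 12-th root of unity. -/
def SiegelTrans (γ : SL(2, ℤ)) : Prop :=
  ∀ τ : ℍ, ∃ ε : ℂ, ε ^ 12 = 1 ∧ ∀ r : ℚ × ℚ, siegel r (γ • τ) = ε * siegel (tAct γ r) τ

theorem siegelTrans_T : SiegelTrans ModularGroup.T := by
  intro τ
  refine ⟨ee (1 / 12), ?_, ?_⟩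
  · rw [← ee_nat, show ((12 : ℕ) : ℂ) * (1 / 12) = 1 by norm_num, ee_one]
  · intro r
    have hact : tAct ModularGroup.T r = (r.1, r.1 + r.2) := by
      simp [tAct, ModularGroup.T]
    have hτ : ((ModularGroup.T • τ : ℍ) : ℂ) = τ + 1 := by
      rw [UpperHalfPlane.modular_T_smul, UpperHalfPlane.coe_vadd]; push_cast; ring
    rw [siegel_eq, siegel_eq, hact, hτ]
    push_cast
    have hz : (r.1 : ℂ) * (τ + 1) + r.2 = (r.1 : ℂ) * τ + (r.1 + r.2) := by ring
    rw [hz]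
    have hK : ∀ z, KK ((τ : ℂ) + 1) z = ee (1 / 12) * KK τ z := by
      intro z
      unfold KK
      rw [ee_add (τ : ℂ) 1, ee_one, mul_one, show (τ : ℂ) + 1 - z = (τ - z) + 1 by ring, ee_add _ 1,
        ee_one, mul_one, show ((τ : ℂ) + 1) / 12 - z / 2 = 1 / 12 + (τ / 12 - z / 2) by ring, ee_add (1/12)]
      ring
    rw [hK]; ring

theorem siegelTrans_S : SiegelTrans ModularGroup.S := by
  intro τ
  have hne : (τ : ℂ) ≠ 0 := τ.ne_zero
  obtain ⟨ε, h1, h2⟩ := KK_S (τ := (τ : ℂ)) τ.2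
  refine ⟨ε, h1, ?_⟩
  intro r
  have hact : tAct ModularGroup.S r = (r.2, -r.1) := by
    simp [tAct, ModularGroup.S]
  have hτ : ((ModularGroup.S • τ : ℍ) : ℂ) = -1 / τ := by
    rw [UpperHalfPlane.modular_S_smul]
    change (-(τ : ℂ))⁻¹ = _
    rw [neg_div, one_div, inv_neg]
  rw [siegel_eq, siegel_eq, hact, hτ]
  push_cast
  have hz : (r.1 : ℂ) * (-1 / τ) + r.2 = (r.2 * τ + -r.1) / τ := by field_simp; ring
  rw [hz, h2]
  have : ee ((r.1 : ℂ) * ((r.2 * τ + -r.1) / τ) / 2) * ee ((r.2 * τ + -r.1) ^ 2 / (2 * τ)) =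
      ee ((r.2 : ℂ) * (r.2 * τ + -r.1) / 2) := by
    rw [← ee_add]; congr 1; field_simp; ring
  rw [← this]; ring

theorem tAct_mul (γ δ : SL(2, ℤ)) (r : ℚ × ℚ) : tAct (γ * δ) r = tAct δ (tAct γ r) := by
  simp only [tAct, Matrix.SpecialLinearGroup.coe_mul, Matrix.mul_apply, Fin.sum_univ_two]
  push_cast
  ext <;> simp <;> ring

theorem tAct_one (r : ℚ × ℚ) : tAct 1 r = r := by
  simp [tAct]

theorem siegelTrans_mul {γ δ : SL(2, ℤ)} (h1 : SiegelTrans γ) (h2 : SiegelTrans δ) :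
    SiegelTrans (γ * δ) := by
  intro τ
  obtain ⟨e1, a1, b1⟩ := h1 (δ • τ)
  obtain ⟨e2, a2, b2⟩ := h2 τ
  refine ⟨e1 * e2, by rw [mul_pow, a1, a2, one_mul], fun r => ?_⟩
  rw [mul_smul, b1, b2, tAct_mul]; ring

theorem siegelTrans_inv {γ : SL(2, ℤ)} (h1 : SiegelTrans γ) : SiegelTrans γ⁻¹ := by
  intro τ
  obtain ⟨e1, a1, b1⟩ := h1 (γ⁻¹ • τ)
  refine ⟨e1⁻¹, by rw [inv_pow, a1, inv_one], fun r => ?_⟩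
  have h := b1 (tAct γ⁻¹ r)
  rw [← tAct_mul, inv_mul_cancel, tAct_one, smul_inv_smul] at h
  have : e1 ≠ 0 := by rintro rfl; simp at a1
  rw [h, inv_mul_cancel_left₀ this]

theorem siegelTrans_all (γ : SL(2, ℤ)) : SiegelTrans γ := by
  have hmem : γ ∈ Subgroup.closure {ModularGroup.S, ModularGroup.T} := by
    simp [SpecialLinearGroup.SL2Z_generators]
  induction hmem using Subgroup.closure_induction with
  | mem x hx =>
    rcases hx with rfl | rfl
    · exact siegelTrans_S
    · exact siegelTrans_T
  | one => exact fun τ => ⟨1, by simp, fun r => by simp [tAct_one]⟩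
  | mul x y _ _ hx hy => exact siegelTrans_mul hx hy
  | inv x _ hx => exact siegelTrans_inv hx

/-- if `∑_r m(r) ≡ 0 (mod 12)` then
`∏_r g_r(γτ)^{m(r)} = ∏_r g_{ᵗγ r}(τ)^{m(r)}` for every `γ ∈ SL₂(ℤ)`. -/
theorem statement7 (N : ℕ) (hN : 1 < N) (m : ℚ × ℚ → ℤ)
    (hmem : ∀ r : ℚ × ℚ, m r ≠ 0 → InDen N r ∧ NonIntegral r)
    (hfin : (Function.support m).Finite)
    (hsum : (12 : ℤ) ∣ ∑ᶠ r : ℚ × ℚ, m r) :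
    ∀ γ : SL(2, ℤ), ∀ τ : ℍ,
      (∏ᶠ r : ℚ × ℚ, siegel r (γ • τ) ^ m r) =
        ∏ᶠ r : ℚ × ℚ, siegel (tAct γ r) τ ^ m r := by
  intro γ τ
  obtain ⟨ε, hε, h⟩ := siegelTrans_all γ τ
  have hε0 : ε ≠ 0 := by rintro rfl; simp at hε
  have hs : ∀ f : ℚ × ℚ → ℂ, (Function.mulSupport fun r => f r ^ m r) ⊆ hfin.toFinset := by
    intro f r hr
    simp only [Set.Finite.coe_toFinset, Function.mem_support]
    intro h0
    exact hr (by simp [h0])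
  rw [finprod_eq_prod_of_mulSupport_subset _ (hs _), finprod_eq_prod_of_mulSupport_subset _ (hs _)]
  rw [finsum_eq_sum_of_support_subset m (s := hfin.toFinset) (by simp)] at hsum
  simp only [h, mul_zpow, Finset.prod_mul_distrib]
  have h1 : ∏ r ∈ hfin.toFinset, ε ^ m r = ε ^ ∑ r ∈ hfin.toFinset, m r := by
    induction hfin.toFinset using Finset.induction_on with
    | empty => simp
    | insert a s ha ih => rw [Finset.prod_insert ha, Finset.sum_insert ha, zpow_add₀ hε0, ih]
  obtain ⟨k, hk⟩ := hsum
  have h12 : ε ^ (12 : ℤ) = 1 := by exact_mod_cast hε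
  rw [h1, hk, _root_.zpow_mul, h12, _root_.one_zpow, one_mul]
end
end
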